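/- Convergence of DEKI with ergodic data (Theorem 2.2): under the ergodic DEKI setting, assume the initial ensemble is 𝓕_0-measurable, square-integrable, satisfies C_0 ⪰ σ_l·I almost surely for some σ_l > 0 with λ := 2ασ_l ∈ (0,1), E_0 > 0 and the step size obeys h ≤ min(α/(J(A_max + α)²), J/α)·E_0^{-1} almost surely. Then there exists a constant C > 0, not depending on ε, τ or T, such that for every ε > 0 and every integer τ ≥ 1 with ‖E[S_{t+1+τ}ᵀS_{t+1+τ} | 𝓕_t] − A‖ ≤ ε almost surely for all t ≥ 1 (ergodicity/mixing assumption), and for every T ≥ τ + 1, E[J(z̄_T)] − J(z^{opt}) ≤ C·( ε + (1 + τ·(1 + log τ + log T))/T^λ ). -/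

import Mathlib

open Matrix BigOperators MeasureTheory ProbabilityTheory

noncomputable section

/-- Sample mean of an ensemble. -/
def ensMean {d : ℕ} (J : ℕ) (z : Fin J → Fin d → ℝ) : Fin d → ℝ :=
  (J : ℝ)⁻¹ • ∑ j, z j

/-- Ensemble spread `e^{(j)} = z^{(j)} - z̄`. -/
def ensSpread {d : ℕ} (J : ℕ) (z : Fin J → Fin d → ℝ) (j : Fin J) : Fin d → ℝ :=
  z j - ensMean J z

/-- Sample covariance `C = (1/J) ∑_j e^{(j)} (e^{(j)})ᵀ`. -/
def ensCov {d : ℕ} (J : ℕ) (z : Fin J → Fin d → ℝ) : Matrix (Fin d) (Fin d) ℝ :=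
  (J : ℝ)⁻¹ • ∑ j, vecMulVec (ensSpread J z j) (ensSpread J z j)

/-- Squared Euclidean norm of a vector in `ℝ^d`. -/
def enormSq {d : ℕ} (v : Fin d → ℝ) : ℝ := ∑ i, (v i)^2

/-- Ensemble spread energy `E = (1/J)∑_j ‖e^{(j)}‖²`. -/
def ensEnergy {d : ℕ} (J : ℕ) (z : Fin J → Fin d → ℝ) : ℝ :=
  (J : ℝ)⁻¹ * ∑ j, enormSq (ensSpread J z j)

/-- The (Euclidean) operator norm of a square matrix. -/
def opNorm {d : ℕ} (M : Matrix (Fin d) (Fin d) ℝ) : ℝ :=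
  ‖Matrix.toEuclideanCLM (𝕜 := ℝ) M‖

/-- The limiting Tikhonov-regularized objective
`J(z) = ½⟨z − z_*, A(z − z_*)⟩ + (α/2)‖z‖²`. -/
def limObj {d : ℕ} (A : Matrix (Fin d) (Fin d) ℝ) (α : ℝ) (zstar : Fin d → ℝ)
    (z : Fin d → ℝ) : ℝ :=
  (1/2) * ((z - zstar) ⬝ᵥ (A *ᵥ (z - zstar))) + (α/2) * enormSq z

/-- The unique minimizer `z^{opt} = (A + αI)⁻¹ A z_*` of the limiting objective. -/
def limOpt {d : ℕ} (A : Matrix (Fin d) (Fin d) ℝ) (α : ℝ) (zstar : Fin d → ℝ) :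
    Fin d → ℝ :=
  (A + α • (1 : Matrix (Fin d) (Fin d) ℝ))⁻¹ *ᵥ (A *ᵥ zstar)

/-!
Write `H_t = S_{t+1}ᵀ S_{t+1} + α` for the Hessian of the `t`-th step and `M_t` for the product of
the matrices `1 - h C_s H_s`, `s < t`. The covariances factor as `C_t = M_t C₀ M_tᵀ`, and the
smallness of the step makes `C_t` decrease like `1 / t`; since `C₀` is coercive, this gives
`‖M_t‖ ≲ t^{-1/2}`.

Variation of constants expresses the error of the mean as
`z̄_t - z^{opt} = M_t (z̄_0 - z^{opt} - h ∑_{s < t} D_s ξ_s)`, where `D_s = M_{s+1}⁻¹ C_s` and the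
forcing is `ξ_s = (S_{s+1}ᵀ S_{s+1} - A)(z^{opt} - z_*) - S_{s+1}ᵀ w_{s+1}`. The factorization of
`C_s` gives `D_s = G_s (1 - h H_s C_s)⁻¹` with `G_s = C₀ M_sᵀ`, which is of size `s^{-1/2}` and
varies by `O(s^{-3/2})` in one step. The noise terms are orthogonal martingale increments, so their
sum has second moment `O(log t)`. In the sum of the fluctuations of `S_{s+1}ᵀ S_{s+1}`, `D_s` may be
replaced by a gain frozen `τ` steps earlier; conditioning on that time makes the covariances `O(ε)`,
so that the second moment is `O(τ (1 + log t) + ε t)`. Multiplication by `‖M_t‖² = O(1 / t)` gives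
the rate.
-/
namespace Deki

open scoped Matrix.Norms.L2Operator

/-! ### Euclidean norms and the spectral norm -/

section Euclidean

variable {ι κ : Type*} [Fintype ι] [Fintype κ]

/-- The Euclidean norm of a plain vector `ι → ℝ`, whose instance norm is the sup norm. -/
def euclNorm (x : ι → ℝ) : ℝ := ‖WithLp.toLp 2 x‖

lemma euclNorm_nonneg (x : ι → ℝ) : 0 ≤ euclNorm x := norm_nonneg _

lemma euclNorm_zero : euclNorm (0 : ι → ℝ) = 0 := by simp [euclNorm]

lemma euclNorm_sub_le (x y : ι → ℝ) : euclNorm (x - y) ≤ euclNorm x + euclNorm y :=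
  norm_sub_le (WithLp.toLp 2 x) (WithLp.toLp 2 y)

lemma euclNorm_sum_le {β : Type*} (s : Finset β) (x : β → ι → ℝ) :
    euclNorm (∑ b ∈ s, x b) ≤ ∑ b ∈ s, euclNorm (x b) := by
  simpa [euclNorm] using norm_sum_le s fun b => WithLp.toLp 2 (x b)

lemma euclNorm_smul (c : ℝ) (x : ι → ℝ) : euclNorm (c • x) = |c| * euclNorm x :=
  norm_smul c (WithLp.toLp 2 x)

lemma euclNorm_sq (x : ι → ℝ) : euclNorm x ^ 2 = x ⬝ᵥ x := by
  rw [euclNorm, EuclideanSpace.norm_sq_eq]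
  simp [dotProduct, sq]

lemma euclNorm_sq_eq_enormSq {d : ℕ} (x : Fin d → ℝ) : euclNorm x ^ 2 = enormSq x := by
  rw [euclNorm_sq]
  simp [enormSq, dotProduct, sq]

lemma euclNorm_add_sq (x y : ι → ℝ) :
    euclNorm (x + y) ^ 2 = euclNorm x ^ 2 + 2 * (x ⬝ᵥ y) + euclNorm y ^ 2 := by
  simp only [euclNorm_sq, add_dotProduct, dotProduct_add, dotProduct_comm y x]
  ring

lemma abs_dotProduct_le (x y : ι → ℝ) : |x ⬝ᵥ y| ≤ euclNorm x * euclNorm y := by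
  have := abs_real_inner_le_norm (WithLp.toLp 2 y) (WithLp.toLp 2 x)
  rwa [EuclideanSpace.inner_toLp_toLp, star_trivial, mul_comm] at this

lemma dotProduct_le (x y : ι → ℝ) : x ⬝ᵥ y ≤ euclNorm x * euclNorm y :=
  (le_abs_self _).trans (abs_dotProduct_le x y)

lemma abs_apply_le_euclNorm (x : ι → ℝ) (i : ι) : |x i| ≤ euclNorm x :=
  PiLp.norm_apply_le (WithLp.toLp 2 x) i

variable [DecidableEq ι]

lemma euclNorm_mulVec_le (M : Matrix κ ι ℝ) (x : ι → ℝ) : euclNorm (M *ᵥ x) ≤ ‖M‖ * euclNorm x :=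
  M.l2_opNorm_mulVec (WithLp.toLp 2 x)

lemma norm_le_of_euclNorm_mulVec_le {M : Matrix κ ι ℝ} {c : ℝ} (hc : 0 ≤ c)
    (hM : ∀ x, euclNorm (M *ᵥ x) ≤ c * euclNorm x) : ‖M‖ ≤ c := by
  rw [Matrix.l2_opNorm_def]
  exact ContinuousLinearMap.opNorm_le_bound _ hc fun x => hM x.ofLp

lemma norm_one_le : ‖(1 : Matrix ι ι ℝ)‖ ≤ 1 :=
  norm_le_of_euclNorm_mulVec_le zero_le_one fun x => by simp

lemma norm_transpose [DecidableEq κ] (M : Matrix κ ι ℝ) : ‖Mᵀ‖ = ‖M‖ := by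
  rw [← Matrix.l2_opNorm_conjTranspose M, conjTranspose_eq_transpose_of_trivial]

lemma norm_sq_eq_norm_transpose_mul_self (M : Matrix κ ι ℝ) : ‖M‖ ^ 2 = ‖Mᵀ * M‖ := by
  classical
  rw [← conjTranspose_eq_transpose_of_trivial, Matrix.l2_opNorm_conjTranspose_mul_self, sq]

lemma dotProduct_mulVec_le (M : Matrix ι ι ℝ) (x : ι → ℝ) :
    x ⬝ᵥ (M *ᵥ x) ≤ ‖M‖ * euclNorm x ^ 2 :=
  calc x ⬝ᵥ (M *ᵥ x) ≤ euclNorm x * euclNorm (M *ᵥ x) := dotProduct_le _ _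
    _ ≤ euclNorm x * (‖M‖ * euclNorm x) :=
      mul_le_mul_of_nonneg_left (euclNorm_mulVec_le M x) (euclNorm_nonneg x)
    _ = ‖M‖ * euclNorm x ^ 2 := by ring

lemma isUnit_one_sub_of_norm_le {X : Matrix ι ι ℝ} {θ : ℝ} (hθ : θ < 1) (hX : ‖X‖ ≤ θ) :
    IsUnit (1 - X).det :=
  (Matrix.isUnit_iff_isUnit_det _).1 (isUnit_one_sub_of_norm_lt_one (hX.trans_lt hθ))

lemma inv_one_sub_sub_one {X : Matrix ι ι ℝ} {θ : ℝ} (hθ : θ < 1) (hX : ‖X‖ ≤ θ) :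
    (1 - X)⁻¹ - 1 = X * (1 - X)⁻¹ := by
  have h := Matrix.mul_nonsing_inv _ (isUnit_one_sub_of_norm_le hθ hX)
  rw [sub_mul, one_mul] at h
  nth_rewrite 2 [← h]
  abel

lemma norm_inv_one_sub_le {X : Matrix ι ι ℝ} {θ : ℝ} (hθ : θ < 1) (hX : ‖X‖ ≤ θ) :
    ‖(1 - X)⁻¹‖ ≤ (1 - θ)⁻¹ := by
  set R := (1 - X)⁻¹
  have hR : ‖R‖ ≤ 1 + θ * ‖R‖ :=
    calc ‖R‖ = ‖1 + X * R‖ := by rw [← inv_one_sub_sub_one hθ hX, add_sub_cancel]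
      _ ≤ ‖(1 : Matrix ι ι ℝ)‖ + ‖X * R‖ := norm_add_le _ _
      _ ≤ 1 + ‖X‖ * ‖R‖ := add_le_add norm_one_le (norm_mul_le _ _)
      _ ≤ 1 + θ * ‖R‖ := by gcongr
  rw [← one_div, le_div_iff₀ (by linarith)]
  linarith

end Euclidean

section PosSemidef

variable {ι : Type*} {M : Matrix ι ι ℝ}

lemma transpose_eq_of_posSemidef (hM : M.PosSemidef) : Mᵀ = M := by
  simpa using hM.isHermitian.eq

variable [Fintype ι]

lemma dotProduct_mulVec_nonneg (hM : M.PosSemidef) (x : ι → ℝ) : 0 ≤ x ⬝ᵥ (M *ᵥ x) := by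
  simpa using hM.dotProduct_mulVec_nonneg x

lemma exists_posSemidef_factor (hM : M.PosSemidef) :
    ∃ B : Matrix ι ι ℝ, M = Bᵀ * B ∧ ∀ x, x ⬝ᵥ (M *ᵥ x) = euclNorm (B *ᵥ x) ^ 2 := by
  classical
  obtain ⟨B, hB⟩ : ∃ B : Matrix ι ι ℝ, M = Bᴴ * B := by
    open scoped MatrixOrder in
    exact CStarAlgebra.nonneg_iff_eq_star_mul_self.mp hM.nonneg
  rw [conjTranspose_eq_transpose_of_trivial] at hB
  refine ⟨B, hB, fun x => ?_⟩
  rw [euclNorm_sq, hB, ← Matrix.mulVec_mulVec, Matrix.dotProduct_transpose_mulVec]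

variable [DecidableEq ι]

lemma norm_le_of_posSemidef (hM : M.PosSemidef) {c : ℝ} (hc : 0 ≤ c)
    (h : ∀ x, x ⬝ᵥ (M *ᵥ x) ≤ c * euclNorm x ^ 2) : ‖M‖ ≤ c := by
  obtain ⟨B, rfl, hq⟩ := exists_posSemidef_factor hM
  have hB : ‖B‖ ≤ √c := norm_le_of_euclNorm_mulVec_le (Real.sqrt_nonneg _) fun x => by
    refine le_of_sq_le_sq ?_ (mul_nonneg (Real.sqrt_nonneg _) (euclNorm_nonneg x))
    rw [← hq, mul_pow, Real.sq_sqrt hc]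
    exact h x
  calc ‖Bᵀ * B‖ = ‖B‖ ^ 2 := (norm_sq_eq_norm_transpose_mul_self B).symm
    _ ≤ √c ^ 2 := by gcongr
    _ = c := Real.sq_sqrt hc

lemma euclNorm_mulVec_sq_le (hM : M.PosSemidef) (x : ι → ℝ) :
    euclNorm (M *ᵥ x) ^ 2 ≤ ‖M‖ * (x ⬝ᵥ (M *ᵥ x)) := by
  obtain ⟨B, rfl, hq⟩ := exists_posSemidef_factor hM
  have hB : euclNorm ((Bᵀ * B) *ᵥ x) ≤ ‖B‖ * euclNorm (B *ᵥ x) := by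
    rw [← Matrix.mulVec_mulVec, ← norm_transpose B]
    exact euclNorm_mulVec_le _ _
  have := euclNorm_nonneg ((Bᵀ * B) *ᵥ x)
  calc euclNorm ((Bᵀ * B) *ᵥ x) ^ 2 ≤ (‖B‖ * euclNorm (B *ᵥ x)) ^ 2 := by gcongr
    _ = ‖Bᵀ * B‖ * (x ⬝ᵥ ((Bᵀ * B) *ᵥ x)) := by
      rw [mul_pow, norm_sq_eq_norm_transpose_mul_self, hq]

lemma mul_norm_sq_le_of_coercive {σ : ℝ} (hσ : 0 < σ)
    (hM : ∀ x, σ * euclNorm x ^ 2 ≤ x ⬝ᵥ (M *ᵥ x)) (N : Matrix ι ι ℝ) :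
    σ * ‖N‖ ^ 2 ≤ ‖N * M * Nᵀ‖ := by
  set K := ‖N * M * Nᵀ‖
  have hN : ‖Nᵀ‖ ≤ √(K / σ) := norm_le_of_euclNorm_mulVec_le (Real.sqrt_nonneg _) fun x => by
    refine le_of_sq_le_sq ?_ (mul_nonneg (Real.sqrt_nonneg _) (euclNorm_nonneg x))
    rw [mul_pow, Real.sq_sqrt (by positivity), div_mul_eq_mul_div, le_div_iff₀ hσ, mul_comm]
    calc σ * euclNorm (Nᵀ *ᵥ x) ^ 2 ≤ (Nᵀ *ᵥ x) ⬝ᵥ (M *ᵥ (Nᵀ *ᵥ x)) := hM _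
      _ = x ⬝ᵥ ((N * M * Nᵀ) *ᵥ x) := by
        rw [← Matrix.mulVec_mulVec, ← Matrix.mulVec_mulVec, Matrix.dotProduct_mulVec x,
          Matrix.mulVec_transpose]
      _ ≤ K * euclNorm x ^ 2 := dotProduct_mulVec_le _ _
  rw [norm_transpose] at hN
  calc σ * ‖N‖ ^ 2 ≤ σ * √(K / σ) ^ 2 := by gcongr
    _ = K := by rw [Real.sq_sqrt (by positivity), mul_div_cancel₀ _ hσ.ne']

end PosSemidef

/-! ### Deterministic contraction of the covariance -/

section Transition

variable {ι κ : Type*} [Fintype ι] [DecidableEq ι] [Fintype κ]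
variable (h : ℝ) (C₀ : Matrix ι ι ℝ) (H : ℕ → Matrix ι ι ℝ)

/-- The product `M_t` of the factors `1 - h C_s H_s`, `s < t`, where `C_s = M_s C₀ M_sᵀ`. It maps
the initial spreads of an ensemble with covariance `C₀` to the spreads at time `t`. -/
def transition : ℕ → Matrix ι ι ℝ
  | 0 => 1
  | t + 1 => (1 - h • (transition t * C₀ * (transition t)ᵀ * H t)) * transition t

/-- The covariance `C_t = M_t C₀ M_tᵀ` of the ensemble at time `t`. -/
def covariance (t : ℕ) : Matrix ι ι ℝ := transition h C₀ H t * C₀ * (transition h C₀ H t)ᵀ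

/-- The gain `G_t = C₀ M_tᵀ`, which depends on `H_s` for `s < t` only. -/
def gain (t : ℕ) : Matrix ι ι ℝ := C₀ * (transition h C₀ H t)ᵀ

/-- The gain `D_t = G_t (1 - h H_t C_t)⁻¹`, for which `M_{t+1} D_t = C_t`. -/
def implicitGain (t : ℕ) : Matrix ι ι ℝ := gain h C₀ H t * (1 - h • (H t * covariance h C₀ H t))⁻¹

/-- The partial sums `∑_{s < t} D_s ξ_s` of a forcing term `ξ` filtered through gains `D`. -/
def drivenSum (D : ℕ → Matrix ι κ ℝ) (ξ : ℕ → κ → ℝ) (t : ℕ) : ι → ℝ :=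
  ∑ s ∈ Finset.range t, D s *ᵥ ξ s

lemma transition_succ (t : ℕ) :
    transition h C₀ H (t + 1) = (1 - h • (covariance h C₀ H t * H t)) * transition h C₀ H t := rfl

lemma covariance_zero : covariance h C₀ H 0 = C₀ := by simp [covariance, transition]

lemma covariance_succ (t : ℕ) :
    covariance h C₀ H (t + 1) = (1 - h • (covariance h C₀ H t * H t)) * covariance h C₀ H t *
      (1 - h • (covariance h C₀ H t * H t))ᵀ := by
  rw [covariance, transition_succ, transpose_mul]
  generalize 1 - h • (covariance h C₀ H t * H t) = Q
  simp only [covariance, Matrix.mul_assoc]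

variable {h C₀ H}

lemma posSemidef_covariance (hC₀ : C₀.PosSemidef) (t : ℕ) : (covariance h C₀ H t).PosSemidef := by
  simpa [covariance] using hC₀.mul_mul_conjTranspose_same (transition h C₀ H t)

lemma transition_succ_mul_implicitGain {t : ℕ}
    (hunit : IsUnit (1 - h • (H t * covariance h C₀ H t)).det) :
    transition h C₀ H (t + 1) * implicitGain h C₀ H t = covariance h C₀ H t := by
  have hM : transition h C₀ H t * gain h C₀ H t = covariance h C₀ H t :=
    (Matrix.mul_assoc _ _ _).symm
  rw [transition_succ, implicitGain, Matrix.mul_assoc, ← Matrix.mul_assoc (transition h C₀ H t), hM,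
    ← Matrix.mul_assoc]
  set C := covariance h C₀ H t
  have hcomm : (1 - h • (C * H t)) * C = C * (1 - h • (H t * C)) := by
    simp only [sub_mul, mul_sub, one_mul, mul_one, smul_mul_assoc, mul_smul_comm, Matrix.mul_assoc]
  rw [hcomm, Matrix.mul_assoc, Matrix.mul_nonsing_inv _ hunit, mul_one]

-- Variation of constants: the factor `1 - h C_t H_t` is absorbed by `M_{t+1}`, and
-- `M_{t+1} D_t = C_t` moves the forcing inside.
lemma affineRecursion_eq_transition_mulVec {m ξ : ℕ → ι → ℝ}
    (hunit : ∀ t, IsUnit (1 - h • (H t * covariance h C₀ H t)).det)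
    (hm : ∀ t, m (t + 1) = (1 - h • (covariance h C₀ H t * H t)) *ᵥ m t
      - h • (covariance h C₀ H t *ᵥ ξ t)) (t : ℕ) :
    m t = transition h C₀ H t *ᵥ (m 0 - h • drivenSum (implicitGain h C₀ H) ξ t) := by
  induction t with
  | zero => simp [transition, drivenSum]
  | succ t ih =>
    have hforce : transition h C₀ H (t + 1) *ᵥ (implicitGain h C₀ H t *ᵥ ξ t)
        = covariance h C₀ H t *ᵥ ξ t := by
      rw [Matrix.mulVec_mulVec, transition_succ_mul_implicitGain (hunit t)]
    rw [drivenSum, Finset.sum_range_succ, smul_add, ← sub_sub, Matrix.mulVec_sub,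
      Matrix.mulVec_smul, hforce, hm, transition_succ, ← Matrix.mulVec_mulVec]
    exact congrArg (fun x => _ *ᵥ x - _) ih

end Transition

section Bounds

variable {ι : Type*} [Fintype ι] [DecidableEq ι]

lemma dotProduct_conj_mulVec_le {h α : ℝ} {C H : Matrix ι ι ℝ} (hh : 0 ≤ h) (hC : C.PosSemidef)
    (hH : H.PosSemidef) (hHα : ∀ x, α * euclNorm x ^ 2 ≤ x ⬝ᵥ (H *ᵥ x))
    (hCH : h * (‖C‖ * ‖H‖) ≤ 1) (v : ι → ℝ) :
    v ⬝ᵥ (((1 - h • (C * H)) * C * (1 - h • (C * H))ᵀ) *ᵥ v)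
      ≤ v ⬝ᵥ (C *ᵥ v) - h * α * euclNorm (C *ᵥ v) ^ 2 := by
  set x := C *ᵥ v with hx
  set y := H *ᵥ x
  have hQ : (1 - h • (C * H))ᵀ *ᵥ v = v - h • y := by
    rw [transpose_sub, transpose_one, transpose_smul, transpose_mul, transpose_eq_of_posSemidef hC,
      transpose_eq_of_posSemidef hH, Matrix.sub_mulVec, Matrix.one_mulVec, Matrix.smul_mulVec,
      ← Matrix.mulVec_mulVec]
  have hCsymm (a b : ι → ℝ) : a ⬝ᵥ (C *ᵥ b) = b ⬝ᵥ (C *ᵥ a) := by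
    rw [Matrix.dotProduct_mulVec, ← Matrix.mulVec_transpose, transpose_eq_of_posSemidef hC,
      dotProduct_comm]
  have hexpand : v ⬝ᵥ (((1 - h • (C * H)) * C * (1 - h • (C * H))ᵀ) *ᵥ v)
      = v ⬝ᵥ (C *ᵥ v) - 2 * h * (x ⬝ᵥ y) + h ^ 2 * (y ⬝ᵥ (C *ᵥ y)) := by
    rw [Matrix.mul_assoc, ← Matrix.mulVec_mulVec, Matrix.dotProduct_mulVec,
      ← Matrix.mulVec_transpose, ← Matrix.mulVec_mulVec, hQ]
    simp only [Matrix.mulVec_sub, Matrix.mulVec_smul, sub_dotProduct, dotProduct_sub,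
      smul_dotProduct, dotProduct_smul, smul_eq_mul, hCsymm v y, ← hx, dotProduct_comm y x]
    ring
  have hxy : 0 ≤ x ⬝ᵥ y := dotProduct_mulVec_nonneg hH x
  have hyCy : h * (y ⬝ᵥ (C *ᵥ y)) ≤ x ⬝ᵥ y :=
    calc h * (y ⬝ᵥ (C *ᵥ y)) ≤ h * (‖C‖ * (‖H‖ * (x ⬝ᵥ y))) := by
          gcongr
          exact (dotProduct_mulVec_le C y).trans (by gcongr; exact euclNorm_mulVec_sq_le hH x)
      _ = h * (‖C‖ * ‖H‖) * (x ⬝ᵥ y) := by ring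
      _ ≤ x ⬝ᵥ y := mul_le_of_le_one_left hxy hCH
  rw [hexpand]
  linarith [mul_le_mul_of_nonneg_left hyCy hh, mul_le_mul_of_nonneg_left (hHα x) hh]

/-- The hypotheses on the data of a covariance recursion: the initial covariance lies between `σ`
and `c`, and the Hessians `H t` lie between `α` and `L`. -/
structure IsAdmissible (α L σ c : ℝ) (C₀ : Matrix ι ι ℝ) (H : ℕ → Matrix ι ι ℝ) : Prop where
  posSemidef_init : C₀.PosSemidef
  coercive_init : ∀ x, σ * euclNorm x ^ 2 ≤ x ⬝ᵥ (C₀ *ᵥ x)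
  norm_init_le : ‖C₀‖ ≤ c
  posSemidef : ∀ t, (H t).PosSemidef
  coercive : ∀ t x, α * euclNorm x ^ 2 ≤ x ⬝ᵥ (H t *ᵥ x)
  norm_le : ∀ t, ‖H t‖ ≤ L

/-- Gains `D` of size `t^(-1/2)` that stay within `t^(-3/2)` of a sequence `G` with increments of
size `t^(-3/2)`. Here `D` anticipates the data of one step while `G` is predictable. -/
structure SlowlyVarying (κ : ℝ) (G D : ℕ → Matrix ι ι ℝ) : Prop where
  norm_le : ∀ t, ‖G t‖ ≤ κ / √(t + 1)
  norm_le' : ∀ t, ‖D t‖ ≤ κ / √(t + 1)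
  norm_sub_le : ∀ t, ‖D t - G t‖ ≤ κ / ((t + 1) * √(t + 1))
  norm_succ_sub_le : ∀ t, ‖G (t + 1) - G t‖ ≤ κ / ((t + 1) * √(t + 1))

-- Discrete form of `a' = -a ^ 2 / N`, whose solutions satisfy `a(s) ≤ N / s`.
lemma logistic_step {s a a' N : ℝ} (hs : 0 ≤ s) (ha : 0 ≤ a) (haN : (s + 1) * a ≤ N) (ha' : a' ≤ a)
    (hstep : a' * N ≤ a * (N - a)) : (s + 1 + 1) * a' ≤ N := by
  have hsa : 0 ≤ s * a := mul_nonneg hs ha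
  rcases (show 0 ≤ N by nlinarith).eq_or_lt with rfl | hN
  · have : a' ≤ 0 := by linarith
    nlinarith
  · refine le_of_mul_le_mul_right ?_ hN
    calc (s + 1 + 1) * a' * N = (s + 1 + 1) * (a' * N) := by ring
      _ ≤ (s + 1 + 1) * (a * (N - a)) := by gcongr
      _ ≤ N * N := by nlinarith [mul_nonneg (sub_nonneg.2 haN) (show 0 ≤ N - a by linarith)]

namespace IsAdmissible

variable {h α L σ c : ℝ} {C₀ : Matrix ι ι ℝ} {H : ℕ → Matrix ι ι ℝ}

lemma dotProduct_covariance_succ_le_of_norm_le (hA : IsAdmissible α L σ c C₀ H) (hh : 0 ≤ h)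
    (hstep : h * c * L ≤ 1) {t : ℕ} (hC : ‖covariance h C₀ H t‖ ≤ c) (x : ι → ℝ) :
    x ⬝ᵥ (covariance h C₀ H (t + 1) *ᵥ x) ≤
      x ⬝ᵥ (covariance h C₀ H t *ᵥ x) - h * α * euclNorm (covariance h C₀ H t *ᵥ x) ^ 2 := by
  rw [covariance_succ]
  refine dotProduct_conj_mulVec_le hh (posSemidef_covariance hA.posSemidef_init t)
    (hA.posSemidef t) (hA.coercive t) ?_ x
  calc h * (‖covariance h C₀ H t‖ * ‖H t‖) ≤ h * (c * L) := by
        gcongr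
        · exact (norm_nonneg _).trans hC
        · exact hA.norm_le t
    _ ≤ 1 := by rwa [← mul_assoc]

lemma norm_covariance_le (hA : IsAdmissible α L σ c C₀ H) (hh : 0 ≤ h) (hα : 0 ≤ α)
    (hstep : h * c * L ≤ 1) (t : ℕ) : ‖covariance h C₀ H t‖ ≤ c := by
  induction t with
  | zero => simpa [covariance_zero] using hA.norm_init_le
  | succ t ih =>
    refine norm_le_of_posSemidef (posSemidef_covariance hA.posSemidef_init _)
      ((norm_nonneg _).trans ih) fun x => ?_
    calc x ⬝ᵥ (covariance h C₀ H (t + 1) *ᵥ x) ≤ x ⬝ᵥ (covariance h C₀ H t *ᵥ x) :=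
          (hA.dotProduct_covariance_succ_le_of_norm_le hh hstep ih x).trans
            (sub_le_self _ (by positivity))
      _ ≤ ‖covariance h C₀ H t‖ * euclNorm x ^ 2 := dotProduct_mulVec_le _ _
      _ ≤ c * euclNorm x ^ 2 := by gcongr

lemma succ_mul_dotProduct_covariance_le (hA : IsAdmissible α L σ c C₀ H) (hh : 0 ≤ h) (hα : 0 ≤ α)
    (hαL : α ≤ L) (hstep : h * c * L ≤ 1) (t : ℕ) (x : ι → ℝ) :
    (t + 1) * (h * α * (x ⬝ᵥ (covariance h C₀ H t *ᵥ x))) ≤ euclNorm x ^ 2 := by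
  induction t with
  | zero =>
    rw [covariance_zero, Nat.cast_zero, zero_add, one_mul]
    calc h * α * (x ⬝ᵥ (C₀ *ᵥ x)) ≤ h * L * (c * euclNorm x ^ 2) := by
          gcongr
          · exact dotProduct_mulVec_nonneg hA.posSemidef_init x
          · exact mul_nonneg hh (hα.trans hαL)
          · exact (dotProduct_mulVec_le C₀ x).trans (by gcongr; exact hA.norm_init_le)
      _ = h * c * L * euclNorm x ^ 2 := by ring
      _ ≤ euclNorm x ^ 2 := mul_le_of_le_one_left (sq_nonneg _) hstep
  | succ t ih =>
    have hnorm := hA.norm_covariance_le hh hα hstep t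
    have hdec := hA.dotProduct_covariance_succ_le_of_norm_le hh hstep hnorm x
    set q := x ⬝ᵥ (covariance h C₀ H t *ᵥ x)
    set Y := euclNorm (covariance h C₀ H t *ᵥ x)
    have hq : 0 ≤ q := dotProduct_mulVec_nonneg (posSemidef_covariance hA.posSemidef_init t) x
    have hqY : q ^ 2 ≤ euclNorm x ^ 2 * Y ^ 2 :=
      (pow_le_pow_left₀ hq (dotProduct_le _ _) 2).trans_eq (mul_pow _ _ _)
    have hhα : 0 ≤ h * α := mul_nonneg hh hα
    have hdec' := mul_le_mul_of_nonneg_left hdec hhα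
    push_cast
    refine logistic_step (Nat.cast_nonneg t) (mul_nonneg hhα hq) ih
      (by linarith [mul_nonneg hhα (mul_nonneg hhα (sq_nonneg Y))]) ?_
    linarith [mul_le_mul_of_nonneg_right hdec' (sq_nonneg (euclNorm x)),
      mul_le_mul_of_nonneg_left hqY (sq_nonneg (h * α))]

lemma norm_covariance_le_div (hA : IsAdmissible α L σ c C₀ H) (hh : 0 < h) (hα : 0 < α)
    (hαL : α ≤ L) (hstep : h * c * L ≤ 1) (t : ℕ) :
    ‖covariance h C₀ H t‖ ≤ (h * α)⁻¹ / (t + 1) := by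
  refine norm_le_of_posSemidef (posSemidef_covariance hA.posSemidef_init t) (by positivity)
    fun x => ?_
  rw [div_mul_eq_mul_div, le_div_iff₀ (by positivity), inv_mul_eq_div, le_div_iff₀ (by positivity)]
  linarith [hA.succ_mul_dotProduct_covariance_le hh.le hα.le hαL hstep t x]

lemma norm_transition_le (hA : IsAdmissible α L σ c C₀ H) (hh : 0 < h) (hα : 0 < α) (hαL : α ≤ L)
    (hσ : 0 < σ) (hstep : h * c * L ≤ 1) (t : ℕ) :
    ‖transition h C₀ H t‖ ≤ √((h * α)⁻¹ / σ) / √(t + 1) := by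
  rw [← Real.sqrt_div (by positivity)]
  refine Real.le_sqrt_of_sq_le ?_
  rw [div_right_comm, le_div_iff₀' hσ]
  exact (mul_norm_sq_le_of_coercive hσ hA.coercive_init _).trans
    (hA.norm_covariance_le_div hh hα hαL hstep t)

lemma norm_gain_le (hA : IsAdmissible α L σ c C₀ H) (hh : 0 < h) (hα : 0 < α) (hαL : α ≤ L)
    (hσ : 0 < σ) (hstep : h * c * L ≤ 1) (t : ℕ) :
    ‖gain h C₀ H t‖ ≤ c * √((h * α)⁻¹ / σ) / √(t + 1) :=
  calc ‖gain h C₀ H t‖ ≤ ‖C₀‖ * ‖transition h C₀ H t‖ := by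
        rw [← norm_transpose (transition h C₀ H t)]
        exact norm_mul_le _ _
    _ ≤ c * (√((h * α)⁻¹ / σ) / √(t + 1)) :=
        mul_le_mul hA.norm_init_le (hA.norm_transition_le hh hα hαL hσ hstep t) (norm_nonneg _)
          ((norm_nonneg _).trans hA.norm_init_le)
    _ = c * √((h * α)⁻¹ / σ) / √(t + 1) := (mul_div_assoc _ _ _).symm

lemma norm_smul_mul_covariance_le (hA : IsAdmissible α L σ c C₀ H) (hh : 0 ≤ h) (hα : 0 ≤ α)
    (hstep : h * c * L ≤ 1) (t : ℕ) : ‖h • (H t * covariance h C₀ H t)‖ ≤ h * c * L :=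
  calc ‖h • (H t * covariance h C₀ H t)‖ ≤ h * (‖H t‖ * ‖covariance h C₀ H t‖) := by
        rw [norm_smul, Real.norm_of_nonneg hh]
        gcongr
        exact norm_mul_le _ _
    _ ≤ h * (L * c) := by
        gcongr
        · exact (norm_nonneg _).trans (hA.norm_le t)
        · exact hA.norm_le t
        · exact hA.norm_covariance_le hh hα hstep t
    _ = h * c * L := by ring

lemma isUnit_det (hA : IsAdmissible α L σ c C₀ H) (hh : 0 ≤ h) (hα : 0 ≤ α) (hstep : h * c * L < 1)
    (t : ℕ) : IsUnit (1 - h • (H t * covariance h C₀ H t)).det :=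
  isUnit_one_sub_of_norm_le hstep (hA.norm_smul_mul_covariance_le hh hα hstep.le t)

lemma norm_implicitGain_le (hA : IsAdmissible α L σ c C₀ H) (hh : 0 < h) (hα : 0 < α)
    (hαL : α ≤ L) (hσ : 0 < σ) (hstep : h * c * L < 1) (t : ℕ) :
    ‖implicitGain h C₀ H t‖ ≤ c * √((h * α)⁻¹ / σ) * (1 - h * c * L)⁻¹ / √(t + 1) := by
  have hG := hA.norm_gain_le hh hα hαL hσ hstep.le t
  calc ‖implicitGain h C₀ H t‖ ≤ ‖gain h C₀ H t‖ * ‖(1 - h • (H t * covariance h C₀ H t))⁻¹‖ :=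
        norm_mul_le _ _
    _ ≤ c * √((h * α)⁻¹ / σ) / √(t + 1) * (1 - h * c * L)⁻¹ :=
        mul_le_mul hG
          (norm_inv_one_sub_le hstep (hA.norm_smul_mul_covariance_le hh.le hα.le hstep.le t))
          (norm_nonneg _) ((norm_nonneg _).trans hG)
    _ = c * √((h * α)⁻¹ / σ) * (1 - h * c * L)⁻¹ / √(t + 1) := by ring

lemma norm_implicitGain_sub_gain_le (hA : IsAdmissible α L σ c C₀ H) (hh : 0 < h) (hα : 0 < α)
    (hαL : α ≤ L) (hσ : 0 < σ) (hstep : h * c * L < 1) (t : ℕ) :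
    ‖implicitGain h C₀ H t - gain h C₀ H t‖ ≤
      c * √((h * α)⁻¹ / σ) * (L / α) * (1 - h * c * L)⁻¹ / ((t + 1) * √(t + 1)) := by
  set X := h • (H t * covariance h C₀ H t) with hX_def
  have hXθ : ‖X‖ ≤ h * c * L := hA.norm_smul_mul_covariance_le hh.le hα.le hstep.le t
  have hX : ‖X‖ ≤ h * (L * ((h * α)⁻¹ / (t + 1))) := by
    rw [hX_def, norm_smul, Real.norm_of_nonneg hh.le]
    gcongr
    exact (norm_mul_le _ _).trans (mul_le_mul (hA.norm_le t)
      (hA.norm_covariance_le_div hh hα hαL hstep.le t) (norm_nonneg _) (hα.le.trans hαL))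
  have hfactor : implicitGain h C₀ H t - gain h C₀ H t = gain h C₀ H t * (X * (1 - X)⁻¹) := by
    rw [← inv_one_sub_sub_one hstep hXθ, mul_sub, mul_one, implicitGain]
  have hG := hA.norm_gain_le hh hα hαL hσ hstep.le t
  have hXR : ‖X * (1 - X)⁻¹‖ ≤ h * (L * ((h * α)⁻¹ / (t + 1))) * (1 - h * c * L)⁻¹ :=
    (norm_mul_le _ _).trans (mul_le_mul hX (norm_inv_one_sub_le hstep hXθ) (norm_nonneg _)
      ((norm_nonneg _).trans hX))
  rw [hfactor]
  calc ‖gain h C₀ H t * (X * (1 - X)⁻¹)‖ ≤ ‖gain h C₀ H t‖ * ‖X * (1 - X)⁻¹‖ := norm_mul_le _ _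
    _ ≤ c * √((h * α)⁻¹ / σ) / √(t + 1) *
          (h * (L * ((h * α)⁻¹ / (t + 1))) * (1 - h * c * L)⁻¹) :=
        mul_le_mul hG hXR (norm_nonneg _) ((norm_nonneg _).trans hG)
    _ = c * √((h * α)⁻¹ / σ) * (L / α) * (1 - h * c * L)⁻¹ / ((t + 1) * √(t + 1)) := by
        field_simp

lemma norm_gain_succ_sub_gain_le (hA : IsAdmissible α L σ c C₀ H) (hh : 0 < h) (hα : 0 < α)
    (hαL : α ≤ L) (hσ : 0 < σ) (hstep : h * c * L ≤ 1) (t : ℕ) :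
    ‖gain h C₀ H (t + 1) - gain h C₀ H t‖ ≤
      c * √((h * α)⁻¹ / σ) * (L / α) / ((t + 1) * √(t + 1)) := by
  have hfactor : gain h C₀ H (t + 1) - gain h C₀ H t
      = -(h • (gain h C₀ H t * (H t * covariance h C₀ H t))) := by
    rw [gain, transition_succ, transpose_mul, transpose_sub, transpose_one, transpose_smul,
      transpose_mul, transpose_eq_of_posSemidef (hA.posSemidef t),
      transpose_eq_of_posSemidef (posSemidef_covariance hA.posSemidef_init t), ← Matrix.mul_assoc,
      mul_sub, mul_one, mul_smul_comm]
    simp only [gain, sub_sub_cancel_left]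
  have hG := hA.norm_gain_le hh hα hαL hσ hstep t
  have hHC : ‖H t * covariance h C₀ H t‖ ≤ L * ((h * α)⁻¹ / (t + 1)) :=
    (norm_mul_le _ _).trans (mul_le_mul (hA.norm_le t)
      (hA.norm_covariance_le_div hh hα hαL hstep t) (norm_nonneg _) (hα.le.trans hαL))
  rw [hfactor, norm_neg, norm_smul, Real.norm_of_nonneg hh.le]
  calc h * ‖gain h C₀ H t * (H t * covariance h C₀ H t)‖
      ≤ h * (c * √((h * α)⁻¹ / σ) / √(t + 1) * (L * ((h * α)⁻¹ / (t + 1)))) := by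
        gcongr
        exact (norm_mul_le _ _).trans (mul_le_mul hG hHC (norm_nonneg _) ((norm_nonneg _).trans hG))
    _ = c * √((h * α)⁻¹ / σ) * (L / α) / ((t + 1) * √(t + 1)) := by field_simp

end IsAdmissible

theorem exists_gain_bound {h α L σ c : ℝ} (hh : 0 < h) (hα : 0 < α) (hαL : α ≤ L) (hσ : 0 < σ)
    (hc : 0 ≤ c) (hstep : h * c * L < 1) :
    ∃ κ, 0 ≤ κ ∧ ∀ (C₀ : Matrix ι ι ℝ) (H : ℕ → Matrix ι ι ℝ), IsAdmissible α L σ c C₀ H →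
      (∀ t : ℕ, ‖transition h C₀ H t‖ ≤ κ / √(t + 1)) ∧
        SlowlyVarying κ (gain h C₀ H) (implicitGain h C₀ H) := by
  have hρ : 1 ≤ (1 - h * c * L)⁻¹ :=
    one_le_inv_iff₀.2 ⟨by linarith,
      by linarith [mul_nonneg (mul_nonneg hh.le hc) (hα.le.trans hαL)]⟩
  have hLα : 1 ≤ L / α := (one_le_div hα).2 hαL
  set r := √((h * α)⁻¹ / σ)
  set κ := r + c * r * (L / α) * (1 - h * c * L)⁻¹
  have hcr : 0 ≤ c * r := mul_nonneg hc (Real.sqrt_nonneg _)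
  have hr : 0 ≤ r := Real.sqrt_nonneg _
  have hcrL : c * r ≤ c * r * (L / α) := le_mul_of_one_le_right hcr hLα
  have hcrρ : c * r * (1 - h * c * L)⁻¹ ≤ c * r * (L / α) * (1 - h * c * L)⁻¹ := by gcongr
  have hcrLρ : c * r * (L / α) ≤ c * r * (L / α) * (1 - h * c * L)⁻¹ :=
    le_mul_of_one_le_right (hcr.trans hcrL) hρ
  refine ⟨κ, by linarith, fun C₀ H hA => ⟨fun t => ?_, ⟨fun t => ?_, fun t => ?_, fun t => ?_,
    fun t => ?_⟩⟩⟩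
  · exact (hA.norm_transition_le hh hα hαL hσ hstep.le t).trans (by gcongr; linarith)
  · exact (hA.norm_gain_le hh hα hαL hσ hstep.le t).trans (by gcongr; linarith)
  · exact (hA.norm_implicitGain_le hh hα hαL hσ hstep t).trans (by gcongr; linarith)
  · exact (hA.norm_implicitGain_sub_gain_le hh hα hαL hσ hstep t).trans (by gcongr; linarith)
  · exact (hA.norm_gain_succ_sub_gain_le hh hα hαL hσ hstep.le t).trans (by gcongr; linarith)

end Bounds

/-! ### Driven sums along a sample path -/

section DrivenSum

lemma drivenSum_succ {ι κ : Type*} [Fintype κ] (D : ℕ → Matrix ι κ ℝ) (ξ : ℕ → κ → ℝ) (t : ℕ) :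
    drivenSum D ξ (t + 1) = drivenSum D ξ t + D t *ᵥ ξ t := Finset.sum_range_succ _ _

lemma drivenSum_sub {ι κ : Type*} [Fintype κ] (D : ℕ → Matrix ι κ ℝ) (ξ η : ℕ → κ → ℝ) (t : ℕ) :
    drivenSum D (fun s => ξ s - η s) t = drivenSum D ξ t - drivenSum D η t := by
  simp only [drivenSum, Matrix.mulVec_sub, Finset.sum_sub_distrib]

lemma sum_range_one_div_sqrt_le (t : ℕ) : ∑ s ∈ Finset.range t, 1 / √((s : ℝ) + 1) ≤ 2 * √t := by
  induction t with
  | zero => simp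
  | succ t ih =>
    have hpos : 0 < √((t : ℝ) + 1) := by positivity
    have hstep : 1 / √((t : ℝ) + 1) ≤ 2 * √((t : ℝ) + 1) - 2 * √t := by
      rw [div_le_iff₀ hpos]
      nlinarith [sq_nonneg (√((t : ℝ) + 1) - √t), Real.sq_sqrt (Nat.cast_nonneg (α := ℝ) t),
        Real.sq_sqrt (show (0 : ℝ) ≤ t + 1 by positivity)]
    rw [Finset.sum_range_succ]
    push_cast
    linarith

variable {ι : Type*} [Fintype ι] [DecidableEq ι] {κ β : ℝ} {G D : ℕ → Matrix ι ι ℝ}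
  {ξ : ℕ → ι → ℝ}

lemma euclNorm_gain_mulVec_le (hD : ∀ t : ℕ, ‖D t‖ ≤ κ / √(t + 1)) (hξ : ∀ t, euclNorm (ξ t) ≤ β)
    (t : ℕ) : euclNorm (D t *ᵥ ξ t) ≤ κ * β / √(t + 1) :=
  calc euclNorm (D t *ᵥ ξ t) ≤ ‖D t‖ * euclNorm (ξ t) := euclNorm_mulVec_le _ _
    _ ≤ κ / √(t + 1) * β :=
      mul_le_mul (hD t) (hξ t) (euclNorm_nonneg _) ((norm_nonneg _).trans (hD t))
    _ = κ * β / √(t + 1) := div_mul_eq_mul_div _ _ _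

lemma mul_nonneg_of_gain_bounds (hD : ∀ t : ℕ, ‖D t‖ ≤ κ / √(t + 1))
    (hξ : ∀ t, euclNorm (ξ t) ≤ β) : 0 ≤ κ * β := by
  simpa using (euclNorm_nonneg _).trans (euclNorm_gain_mulVec_le hD hξ 0)

lemma euclNorm_drivenSum_le (hD : ∀ t : ℕ, ‖D t‖ ≤ κ / √(t + 1)) (hξ : ∀ t, euclNorm (ξ t) ≤ β)
    (t : ℕ) : euclNorm (drivenSum D ξ t) ≤ 2 * (κ * β) * √t :=
  calc euclNorm (drivenSum D ξ t) ≤ ∑ s ∈ Finset.range t, euclNorm (D s *ᵥ ξ s) :=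
        euclNorm_sum_le _ _
    _ ≤ ∑ s ∈ Finset.range t, κ * β * (1 / √((s : ℝ) + 1)) :=
        Finset.sum_le_sum fun s _ => by
          rw [mul_one_div]
          exact euclNorm_gain_mulVec_le hD hξ s
    _ ≤ κ * β * (2 * √t) := by
        rw [← Finset.mul_sum]
        exact mul_le_mul_of_nonneg_left (sum_range_one_div_sqrt_le t)
          (mul_nonneg_of_gain_bounds hD hξ)
    _ = 2 * (κ * β) * √t := by ring

lemma euclNorm_drivenSum_add_sub_le (hD : ∀ t : ℕ, ‖D t‖ ≤ κ / √(t + 1))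
    (hξ : ∀ t, euclNorm (ξ t) ≤ β) (s n : ℕ) :
    euclNorm (drivenSum D ξ (s + n) - drivenSum D ξ s) ≤ n * (κ * β / √(s + 1)) := by
  rw [drivenSum, drivenSum, Finset.sum_range_add_sub_sum_range]
  calc euclNorm (∑ i ∈ Finset.range n, D (s + i) *ᵥ ξ (s + i))
      ≤ ∑ i ∈ Finset.range n, euclNorm (D (s + i) *ᵥ ξ (s + i)) := euclNorm_sum_le _ _
    _ ≤ ∑ _i ∈ Finset.range n, κ * β / √(s + 1) := Finset.sum_le_sum fun i _ => by
        refine (euclNorm_gain_mulVec_le hD hξ (s + i)).trans ?_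
        have := mul_nonneg_of_gain_bounds hD hξ
        gcongr
        simp
    _ = n * (κ * β / √(s + 1)) := by simp

lemma norm_add_sub_le_of_norm_succ_sub_le
    (hG : ∀ t : ℕ, ‖G (t + 1) - G t‖ ≤ κ / ((t + 1) * √(t + 1))) (s n : ℕ) :
    ‖G (s + n) - G s‖ ≤ n * (κ / ((s + 1) * √(s + 1))) := by
  have hκ : 0 ≤ κ := by simpa using (norm_nonneg _).trans (hG 0)
  rw [← dist_eq_norm, dist_comm]
  calc dist (G (s + 0)) (G (s + n))
      ≤ ∑ i ∈ Finset.range n, dist (G (s + i)) (G (s + (i + 1))) :=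
        dist_le_range_sum_dist (fun i => G (s + i)) n
    _ ≤ ∑ _i ∈ Finset.range n, κ / ((s + 1) * √(s + 1)) := Finset.sum_le_sum fun i _ => by
        rw [dist_comm, dist_eq_norm]
        refine (hG (s + i)).trans ?_
        gcongr <;> simp
    _ = n * (κ / ((s + 1) * √(s + 1))) := by simp

lemma dotProduct_mulVec_le_of_le {x y : ι → ℝ} {M : Matrix ι ι ℝ} {a b c : ℝ}
    (hx : euclNorm x ≤ a) (hM : ‖M‖ ≤ b) (hy : euclNorm y ≤ c) : x ⬝ᵥ (M *ᵥ y) ≤ a * (b * c) :=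
  calc x ⬝ᵥ (M *ᵥ y) ≤ euclNorm x * euclNorm (M *ᵥ y) := dotProduct_le _ _
    _ ≤ a * (b * c) := mul_le_mul hx
        ((euclNorm_mulVec_le M y).trans
          (mul_le_mul hM hy (euclNorm_nonneg y) ((norm_nonneg M).trans hM)))
        (euclNorm_nonneg _) ((euclNorm_nonneg x).trans hx)

namespace SlowlyVarying

-- Replaces the cross term at time `s + n` by a predictable one at time `s`.
lemma dotProduct_drivenSum_le (hGD : SlowlyVarying κ G D) (hξ : ∀ t, euclNorm (ξ t) ≤ β) (s : ℕ)
    {n : ℕ} (hn : 1 ≤ n) :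
    drivenSum D ξ (s + n) ⬝ᵥ (D (s + n) *ᵥ ξ (s + n)) ≤
      drivenSum D ξ s ⬝ᵥ (G s *ᵥ ξ (s + n)) + 5 * (κ * β) ^ 2 * (n / (s + 1)) := by
  set Y := drivenSum D ξ
  set t := s + n
  have hκβ : 0 ≤ κ * β := mul_nonneg_of_gain_bounds hGD.norm_le' hξ
  have hκ : 0 ≤ κ := by simpa using (norm_nonneg _).trans (hGD.norm_le 0)
  have hst : (s : ℝ) ≤ t := by simp [t]
  have hn' : (1 : ℝ) ≤ n := mod_cast hn
  have hY (r : ℕ) : euclNorm (Y r) ≤ 2 * (κ * β) * √(r + 1) :=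
    (euclNorm_drivenSum_le hGD.norm_le' hξ r).trans (by gcongr; simp)
  have hsplit : Y t ⬝ᵥ (D t *ᵥ ξ t) = Y s ⬝ᵥ (G s *ᵥ ξ t) + Y t ⬝ᵥ ((D t - G t) *ᵥ ξ t)
      + (Y t - Y s) ⬝ᵥ (G t *ᵥ ξ t) + Y s ⬝ᵥ ((G t - G s) *ᵥ ξ t) := by
    simp only [Matrix.sub_mulVec, dotProduct_sub, sub_dotProduct]
    ring
  have hanticipate : Y t ⬝ᵥ ((D t - G t) *ᵥ ξ t) ≤ 2 * (κ * β) ^ 2 * (n / (s + 1)) :=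
    calc Y t ⬝ᵥ ((D t - G t) *ᵥ ξ t)
        ≤ (2 * (κ * β) * √(t + 1)) * (κ / ((t + 1) * √(t + 1)) * β) :=
          dotProduct_mulVec_le_of_le (hY t) (hGD.norm_sub_le t) (hξ t)
      _ = 2 * (κ * β) ^ 2 * (1 / (t + 1)) := by field_simp
      _ ≤ 2 * (κ * β) ^ 2 * (n / (s + 1)) := by gcongr
  have hdrift : (Y t - Y s) ⬝ᵥ (G t *ᵥ ξ t) ≤ (κ * β) ^ 2 * (n / (s + 1)) :=
    calc (Y t - Y s) ⬝ᵥ (G t *ᵥ ξ t) ≤ (n * (κ * β / √(s + 1))) * (κ / √(s + 1) * β) :=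
          dotProduct_mulVec_le_of_le (euclNorm_drivenSum_add_sub_le hGD.norm_le' hξ s n)
            ((hGD.norm_le t).trans (by gcongr)) (hξ t)
      _ = (κ * β) ^ 2 * (n / √(s + 1) ^ 2) := by field_simp
      _ = (κ * β) ^ 2 * (n / (s + 1)) := by rw [Real.sq_sqrt (by positivity)]
  have hgain : Y s ⬝ᵥ ((G t - G s) *ᵥ ξ t) ≤ 2 * (κ * β) ^ 2 * (n / (s + 1)) :=
    calc Y s ⬝ᵥ ((G t - G s) *ᵥ ξ t)
        ≤ (2 * (κ * β) * √(s + 1)) * (n * (κ / ((s + 1) * √(s + 1))) * β) :=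
          dotProduct_mulVec_le_of_le (hY s)
            (norm_add_sub_le_of_norm_succ_sub_le hGD.norm_succ_sub_le s n) (hξ t)
      _ = 2 * (κ * β) ^ 2 * (n / (s + 1)) := by field_simp
  linarith

lemma euclNorm_drivenSum_succ_sq_le (hGD : SlowlyVarying κ G D) (hξ : ∀ t, euclNorm (ξ t) ≤ β)
    (s : ℕ) {n : ℕ} (hn : 1 ≤ n) :
    euclNorm (drivenSum D ξ (s + n + 1)) ^ 2 ≤ euclNorm (drivenSum D ξ (s + n)) ^ 2
      + 2 * (drivenSum D ξ s ⬝ᵥ (G s *ᵥ ξ (s + n))) + 11 * (κ * β) ^ 2 * (n / (s + 1)) := by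
  have hsquare : euclNorm (D (s + n) *ᵥ ξ (s + n)) ^ 2 ≤ (κ * β) ^ 2 * (n / (s + 1)) :=
    calc euclNorm (D (s + n) *ᵥ ξ (s + n)) ^ 2 ≤ (κ * β / √((s + n : ℕ) + 1)) ^ 2 :=
          pow_le_pow_left₀ (euclNorm_nonneg _) (euclNorm_gain_mulVec_le hGD.norm_le' hξ _) 2
      _ = (κ * β) ^ 2 * (1 / ((s + n : ℕ) + 1)) := by
          rw [div_pow, Real.sq_sqrt (by positivity), mul_one_div]
      _ ≤ (κ * β) ^ 2 * (n / (s + 1)) := by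
          gcongr
          · exact mod_cast hn
          · simp
  rw [drivenSum_succ, euclNorm_add_sq]
  linarith [hGD.dotProduct_drivenSum_le hξ s hn]

lemma euclNorm_transpose_mulVec_drivenSum_le (hGD : SlowlyVarying κ G D)
    (hξ : ∀ t, euclNorm (ξ t) ≤ β) (s : ℕ) :
    euclNorm ((G s)ᵀ *ᵥ drivenSum D ξ s) ≤ 2 * κ * (κ * β) := by
  have hG := hGD.norm_le s
  have hκβ := mul_nonneg_of_gain_bounds hGD.norm_le' hξ
  calc euclNorm ((G s)ᵀ *ᵥ drivenSum D ξ s) ≤ ‖G s‖ * euclNorm (drivenSum D ξ s) := by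
        rw [← norm_transpose]
        exact euclNorm_mulVec_le _ _
    _ ≤ κ / √(s + 1) * (2 * (κ * β) * √(s + 1)) :=
        mul_le_mul hG ((euclNorm_drivenSum_le hGD.norm_le' hξ s).trans (by gcongr; simp))
          (euclNorm_nonneg _) ((norm_nonneg _).trans hG)
    _ = 2 * κ * (κ * β) := by field_simp

end SlowlyVarying

end DrivenSum

/-! ### Measurability of random matrices -/

section Measurability

variable {Ω ι κ l : Type*} {m : MeasurableSpace Ω}

lemma stronglyMeasurable_vec [Finite ι] {x : Ω → ι → ℝ} (hx : ∀ i, Measurable fun ω => x ω i) :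
    StronglyMeasurable x := (measurable_pi_iff.2 hx).stronglyMeasurable

lemma stronglyMeasurable_matrix [Finite ι] [Finite κ] {F : Ω → Matrix ι κ ℝ}
    (hF : ∀ i k, Measurable fun ω => F ω i k) : StronglyMeasurable F :=
  (measurable_pi_iff.2 fun i => measurable_pi_iff.2 (hF i)).stronglyMeasurable (β := ι → κ → ℝ)

lemma measurable_apply {x : Ω → ι → ℝ} (hx : StronglyMeasurable x) (i : ι) :
    Measurable fun ω => x ω i :=
  ((continuous_apply i).comp_stronglyMeasurable hx).measurable

lemma stronglyMeasurable_transpose {F : Ω → Matrix ι κ ℝ} (hF : StronglyMeasurable F) :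
    StronglyMeasurable fun ω => (F ω)ᵀ :=
  continuous_id.matrix_transpose.comp_stronglyMeasurable hF

variable [Fintype κ]

lemma stronglyMeasurable_matrix_mul {F : Ω → Matrix ι κ ℝ} {G : Ω → Matrix κ l ℝ}
    (hF : StronglyMeasurable F) (hG : StronglyMeasurable G) :
    StronglyMeasurable fun ω => F ω * G ω :=
  (continuous_fst.matrix_mul continuous_snd).comp_stronglyMeasurable (hF.prodMk hG)

lemma stronglyMeasurable_mulVec {F : Ω → Matrix ι κ ℝ} {x : Ω → κ → ℝ}
    (hF : StronglyMeasurable F) (hx : StronglyMeasurable x) :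
    StronglyMeasurable fun ω => F ω *ᵥ x ω :=
  (continuous_fst.matrix_mulVec continuous_snd).comp_stronglyMeasurable (hF.prodMk hx)

lemma stronglyMeasurable_euclNorm {x : Ω → κ → ℝ} (hx : StronglyMeasurable x) :
    StronglyMeasurable fun ω => euclNorm (x ω) :=
  (PiLp.continuous_toLp 2 _).norm.comp_stronglyMeasurable hx

lemma stronglyMeasurable_matrix_inv [DecidableEq κ] {F : Ω → Matrix κ κ ℝ}
    (hF : StronglyMeasurable F) : StronglyMeasurable fun ω => (F ω)⁻¹ := by
  simp only [Matrix.inv_def, Ring.inverse_eq_inv']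
  exact (continuous_id.matrix_det.comp_stronglyMeasurable hF).measurable.inv.stronglyMeasurable.smul
    (continuous_id.matrix_adjugate.comp_stronglyMeasurable hF)

variable {𝓕 : Filtration ℕ m}

lemma stronglyMeasurable_drivenSum [Finite ι] {D : ℕ → Ω → Matrix ι κ ℝ} {ξ : ℕ → Ω → κ → ℝ}
    (hD : ∀ t, StronglyMeasurable[𝓕 (t + 1)] (D t)) (hξ : ∀ t, StronglyMeasurable[𝓕 (t + 1)] (ξ t))
    (t : ℕ) : StronglyMeasurable[𝓕 t] fun ω => drivenSum (D · ω) (ξ · ω) t :=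
  Finset.stronglyMeasurable_fun_sum _ fun s hs =>
    (stronglyMeasurable_mulVec (hD s) (hξ s)).mono (𝓕.mono (Finset.mem_range.1 hs))

variable [DecidableEq κ] {C₀ : Ω → Matrix κ κ ℝ} {H : ℕ → Ω → Matrix κ κ ℝ}

lemma stronglyMeasurable_transition (h : ℝ) (hC₀ : StronglyMeasurable[𝓕 0] C₀)
    (hH : ∀ t, StronglyMeasurable[𝓕 (t + 1)] (H t)) (t : ℕ) :
    StronglyMeasurable[𝓕 t] fun ω => transition h (C₀ ω) (H · ω) t := by
  induction t with
  | zero => exact stronglyMeasurable_const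
  | succ t ih =>
    have hM := ih.mono (𝓕.mono t.le_succ)
    have hC := stronglyMeasurable_matrix_mul
      (stronglyMeasurable_matrix_mul hM (hC₀.mono (𝓕.mono (Nat.zero_le _))))
      (stronglyMeasurable_transpose hM)
    exact stronglyMeasurable_matrix_mul (stronglyMeasurable_const.sub
      ((stronglyMeasurable_matrix_mul hC (hH t)).const_smul h)) hM

lemma stronglyMeasurable_gain (h : ℝ) (hC₀ : StronglyMeasurable[𝓕 0] C₀)
    (hH : ∀ t, StronglyMeasurable[𝓕 (t + 1)] (H t)) (t : ℕ) :
    StronglyMeasurable[𝓕 t] fun ω => gain h (C₀ ω) (H · ω) t :=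
  stronglyMeasurable_matrix_mul (hC₀.mono (𝓕.mono (Nat.zero_le t)))
    (stronglyMeasurable_transpose (stronglyMeasurable_transition h hC₀ hH t))

lemma stronglyMeasurable_implicitGain {m' : MeasurableSpace Ω} (h : ℝ)
    (hC₀ : StronglyMeasurable[𝓕 0] C₀) (hH : ∀ t, StronglyMeasurable[𝓕 (t + 1)] (H t)) {t : ℕ}
    (hm' : 𝓕 t ≤ m') (hHt : StronglyMeasurable[m'] (H t)) :
    StronglyMeasurable[m'] fun ω => implicitGain h (C₀ ω) (H · ω) t := by
  have hM := (stronglyMeasurable_transition h hC₀ hH t).mono hm'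
  have hC := stronglyMeasurable_matrix_mul
    (stronglyMeasurable_matrix_mul hM (hC₀.mono ((𝓕.mono (Nat.zero_le t)).trans hm')))
    (stronglyMeasurable_transpose hM)
  exact stronglyMeasurable_matrix_mul ((stronglyMeasurable_gain h hC₀ hH t).mono hm')
    (stronglyMeasurable_matrix_inv (stronglyMeasurable_const.sub
      ((stronglyMeasurable_matrix_mul hHt hC).const_smul h)))

end Measurability

/-! ### Second moments of driven sums -/

section SecondMoment

variable {Ω ι κ : Type*} [Fintype ι] [Fintype κ] {m : MeasurableSpace Ω} {μ : Measure Ω}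

lemma integrable_of_euclNorm_le [IsFiniteMeasure μ] {x : Ω → ι → ℝ} (hx : StronglyMeasurable x)
    {c : ℝ} (hc : ∀ᵐ ω ∂μ, euclNorm (x ω) ≤ c) (i : ι) : Integrable (fun ω => x ω i) μ :=
  .of_bound (measurable_apply hx i).aestronglyMeasurable c
    (hc.mono fun _ hω => (abs_apply_le_euclNorm _ i).trans hω)

lemma integrable_euclNorm_sq_of_le [IsFiniteMeasure μ] {x : Ω → ι → ℝ} (hx : StronglyMeasurable x)
    {c : ℝ} (hc : ∀ᵐ ω ∂μ, euclNorm (x ω) ≤ c) : Integrable (fun ω => euclNorm (x ω) ^ 2) μ := by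
  refine .of_bound ((stronglyMeasurable_euclNorm hx).pow 2).aestronglyMeasurable (c ^ 2) ?_
  filter_upwards [hc] with ω hω
  rw [Real.norm_of_nonneg (sq_nonneg _)]
  exact pow_le_pow_left₀ (euclNorm_nonneg _) hω 2

section Mixing

variable {q f : Ω → ι → ℝ} {c δ : ℝ}

lemma integrable_dotProduct_of_euclNorm_le (hq : StronglyMeasurable q)
    (hqc : ∀ᵐ ω ∂μ, euclNorm (q ω) ≤ c) (hf : ∀ i, Integrable (fun ω => f ω i) μ) :
    Integrable (fun ω => q ω ⬝ᵥ f ω) μ :=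
  integrable_finsetSum _ fun i _ => (hf i).bdd_mul (c := c)
    (measurable_apply hq i).aestronglyMeasurable
    (hqc.mono fun _ hω => (abs_apply_le_euclNorm _ i).trans hω)

variable {m₀ : MeasurableSpace Ω}

lemma integral_dotProduct_eq_integral_dotProduct_condExp [IsFiniteMeasure μ] (hm₀ : m₀ ≤ m)
    (hq : StronglyMeasurable[m₀] q) (hqc : ∀ᵐ ω ∂μ, euclNorm (q ω) ≤ c)
    (hf : ∀ i, Integrable (fun ω => f ω i) μ) :
    ∫ ω, q ω ⬝ᵥ f ω ∂μ = ∫ ω, q ω ⬝ᵥ (fun i => (μ[fun ω' => f ω' i | m₀]) ω) ∂μ := by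
  have hbdd {g : Ω → ℝ} (hg : Integrable g μ) (i : ι) : Integrable (fun ω => q ω i * g ω) μ :=
    hg.bdd_mul (c := c) ((measurable_apply hq i).mono hm₀ le_rfl).aestronglyMeasurable
      (hqc.mono fun _ hω => (abs_apply_le_euclNorm _ i).trans hω)
  simp only [dotProduct]
  rw [integral_finsetSum _ fun i _ => hbdd (hf i) i,
    integral_finsetSum _ fun i _ => hbdd integrable_condExp i]
  refine Finset.sum_congr rfl fun i _ => ?_
  rw [← integral_condExp hm₀]
  exact integral_congr_ae (condExp_mul_of_stronglyMeasurable_left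
    (measurable_apply hq i).stronglyMeasurable (hbdd (hf i) i) (hf i))

lemma integral_dotProduct_le_of_condExp_le [IsProbabilityMeasure μ] (hm₀ : m₀ ≤ m)
    (hq : StronglyMeasurable[m₀] q) (hqc : ∀ᵐ ω ∂μ, euclNorm (q ω) ≤ c)
    (hf : ∀ i, Integrable (fun ω => f ω i) μ)
    (hδ : ∀ᵐ ω ∂μ, euclNorm (fun i => (μ[fun ω' => f ω' i | m₀]) ω) ≤ δ) :
    ∫ ω, q ω ⬝ᵥ f ω ∂μ ≤ c * δ := by
  rw [integral_dotProduct_eq_integral_dotProduct_condExp hm₀ hq hqc hf]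
  calc ∫ ω, q ω ⬝ᵥ (fun i => (μ[fun ω' => f ω' i | m₀]) ω) ∂μ ≤ ∫ _, c * δ ∂μ := by
        refine integral_mono_ae (integrable_dotProduct_of_euclNorm_le (hq.mono hm₀) hqc
          fun i => integrable_condExp) (integrable_const _) ?_
        filter_upwards [hqc, hδ] with ω hqω hδω
        exact (dotProduct_le _ _).trans (mul_le_mul hqω hδω (euclNorm_nonneg _)
          ((euclNorm_nonneg _).trans hqω))
    _ = c * δ := by simp

-- Conditional expectation commutes with the constant vector `v`, so mixing of a matrix process
-- passes to the forcing it exerts on `v`.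
lemma euclNorm_condExp_sub_mulVec_le [IsFiniteMeasure μ] [DecidableEq κ] (hm₀ : m₀ ≤ m)
    {F : Ω → Matrix ι κ ℝ} (hF : ∀ i k, Integrable (fun ω => F ω i k) μ) (A : Matrix ι κ ℝ)
    (v : κ → ℝ) :
    ∀ᵐ ω ∂μ, euclNorm (fun i => (μ[fun ω' => ((F ω' - A) *ᵥ v) i | m₀]) ω) ≤
      ‖(Matrix.of fun i k => (μ[fun ω' => F ω' i k | m₀]) ω) - A‖ * euclNorm v := by
  have hcond (i : ι) : μ[fun ω' => ((F ω' - A) *ᵥ v) i | m₀] =ᵐ[μ]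
      fun ω => (((Matrix.of fun i k => (μ[fun ω' => F ω' i k | m₀]) ω) - A) *ᵥ v) i := by
    have hexpand : (fun ω' => ((F ω' - A) *ᵥ v) i)
        = (∑ k, v k • fun ω' => F ω' i k) - fun _ => (A *ᵥ v) i := by
      ext ω'
      rw [Matrix.sub_mulVec]
      simp [Matrix.mulVec, dotProduct, mul_comm]
    have hterm (k : κ) : Integrable (v k • fun ω' => F ω' i k) μ := (hF i k).smul (v k)
    rw [hexpand]
    refine (condExp_sub (integrable_finsetSum' _ fun k _ => hterm k) (integrable_const _)
      m₀).trans ?_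
    have hsmul : ∀ᵐ ω ∂μ, ∀ k, (μ[v k • fun ω' => F ω' i k | m₀]) ω
        = v k * (μ[fun ω' => F ω' i k | m₀]) ω :=
      ae_all_iff.2 fun k => condExp_smul (v k) _ m₀
    filter_upwards [condExp_finsetSum (s := Finset.univ) (fun k _ => hterm k) m₀,
      hsmul] with ω hsum hsmulω
    rw [Matrix.sub_mulVec]
    simp only [Pi.sub_apply, hsum, Finset.sum_apply, hsmulω, condExp_const hm₀]
    simp [Matrix.mulVec, dotProduct, mul_comm]
  filter_upwards [ae_all_iff.2 hcond] with ω hω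
  rw [funext hω]
  exact euclNorm_mulVec_le _ v

end Mixing

section Ergodic

variable [DecidableEq ι] [IsProbabilityMeasure μ] {𝓕 : Filtration ℕ m} {K β δ : ℝ}
  {G D : ℕ → Ω → Matrix ι ι ℝ} {ξ : ℕ → Ω → ι → ℝ}

lemma integrable_euclNorm_drivenSum_sq (hD : ∀ t, StronglyMeasurable[𝓕 (t + 1)] (D t))
    (hξ : ∀ t, StronglyMeasurable[𝓕 (t + 1)] (ξ t))
    (hDK : ∀ᵐ ω ∂μ, ∀ t : ℕ, ‖D t ω‖ ≤ K / √(t + 1)) (hξβ : ∀ᵐ ω ∂μ, ∀ t, euclNorm (ξ t ω) ≤ β)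
    (t : ℕ) : Integrable (fun ω => euclNorm (drivenSum (D · ω) (ξ · ω) t) ^ 2) μ :=
  integrable_euclNorm_sq_of_le ((stronglyMeasurable_drivenSum hD hξ t).mono (𝓕.le t))
    (by filter_upwards [hDK, hξβ] with ω hω hω' using euclNorm_drivenSum_le hω hω' t)

lemma integral_euclNorm_drivenSum_sq_le (hDK : ∀ᵐ ω ∂μ, ∀ t : ℕ, ‖D t ω‖ ≤ K / √(t + 1))
    (hξβ : ∀ᵐ ω ∂μ, ∀ t, euclNorm (ξ t ω) ≤ β) (t : ℕ) :
    ∫ ω, euclNorm (drivenSum (D · ω) (ξ · ω) t) ^ 2 ∂μ ≤ 4 * (K * β) ^ 2 * t :=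
  calc ∫ ω, euclNorm (drivenSum (D · ω) (ξ · ω) t) ^ 2 ∂μ ≤ ∫ _, 4 * (K * β) ^ 2 * (t : ℝ) ∂μ := by
        refine integral_mono_of_nonneg (.of_forall fun ω => sq_nonneg _) (integrable_const _) ?_
        filter_upwards [hDK, hξβ] with ω hω hω'
        refine (pow_le_pow_left₀ (euclNorm_nonneg _) (euclNorm_drivenSum_le hω hω' t) 2).trans_eq ?_
        rw [mul_pow, mul_pow, Real.sq_sqrt (Nat.cast_nonneg t)]
        norm_num
    _ = 4 * (K * β) ^ 2 * t := by simp

lemma integral_euclNorm_drivenSum_succ_sq_le (hG : ∀ t, StronglyMeasurable[𝓕 t] (G t))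
    (hD : ∀ t, StronglyMeasurable[𝓕 (t + 1)] (D t)) (hξ : ∀ t, StronglyMeasurable[𝓕 (t + 1)] (ξ t))
    (hGD : ∀ᵐ ω ∂μ, SlowlyVarying K (G · ω) (D · ω)) (hξβ : ∀ᵐ ω ∂μ, ∀ t, euclNorm (ξ t ω) ≤ β)
    {s n : ℕ} (hn : 1 ≤ n)
    (hmix : ∀ᵐ ω ∂μ, euclNorm (fun i => (μ[fun ω' => ξ (s + n) ω' i | 𝓕 s]) ω) ≤ δ) :
    ∫ ω, euclNorm (drivenSum (D · ω) (ξ · ω) (s + n + 1)) ^ 2 ∂μ ≤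
      ∫ ω, euclNorm (drivenSum (D · ω) (ξ · ω) (s + n)) ^ 2 ∂μ
        + 4 * K * (K * β) * δ + 11 * (K * β) ^ 2 * (n / (s + 1)) := by
  set Y : ℕ → Ω → ι → ℝ := fun t ω => drivenSum (D · ω) (ξ · ω) t
  set q : Ω → ι → ℝ := fun ω => (G s ω)ᵀ *ᵥ Y s ω
  have hDK : ∀ᵐ ω ∂μ, ∀ t : ℕ, ‖D t ω‖ ≤ K / √(t + 1) := hGD.mono fun ω hω => hω.norm_le'
  have hq : StronglyMeasurable[𝓕 s] q := stronglyMeasurable_mulVec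
    (stronglyMeasurable_transpose (hG s)) (stronglyMeasurable_drivenSum hD hξ s)
  have hqc : ∀ᵐ ω ∂μ, euclNorm (q ω) ≤ 2 * K * (K * β) := by
    filter_upwards [hGD, hξβ] with ω hω hξω using hω.euclNorm_transpose_mulVec_drivenSum_le hξω s
  have hξi (i : ι) : Integrable (fun ω => ξ (s + n) ω i) μ :=
    integrable_of_euclNorm_le ((hξ _).mono (𝓕.le _)) (hξβ.mono fun ω hω => hω (s + n)) i
  have hY (t : ℕ) : Integrable (fun ω => euclNorm (Y t ω) ^ 2) μ :=
    integrable_euclNorm_drivenSum_sq hD hξ hDK hξβ t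
  have hqξ : Integrable (fun ω => 2 * (q ω ⬝ᵥ ξ (s + n) ω)) μ :=
    (integrable_dotProduct_of_euclNorm_le (hq.mono (𝓕.le s)) hqc hξi).const_mul 2
  have hYqξ : Integrable (fun ω => euclNorm (Y (s + n) ω) ^ 2 + 2 * (q ω ⬝ᵥ ξ (s + n) ω)) μ :=
    (hY _).add hqξ
  have hcross : ∫ ω, q ω ⬝ᵥ ξ (s + n) ω ∂μ ≤ 2 * K * (K * β) * δ :=
    integral_dotProduct_le_of_condExp_le (𝓕.le s) hq hqc hξi hmix
  calc ∫ ω, euclNorm (Y (s + n + 1) ω) ^ 2 ∂μ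
      ≤ ∫ ω, euclNorm (Y (s + n) ω) ^ 2 + 2 * (q ω ⬝ᵥ ξ (s + n) ω)
          + 11 * (K * β) ^ 2 * (n / (s + 1)) ∂μ := by
        refine integral_mono_ae (hY _) (hYqξ.add (integrable_const _)) ?_
        filter_upwards [hGD, hξβ] with ω hω hξω
        simp only [q, Matrix.mulVec_transpose, ← Matrix.dotProduct_mulVec]
        exact hω.euclNorm_drivenSum_succ_sq_le hξω s hn
    _ = ∫ ω, euclNorm (Y (s + n) ω) ^ 2 ∂μ + 2 * ∫ ω, q ω ⬝ᵥ ξ (s + n) ω ∂μ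
          + 11 * (K * β) ^ 2 * (n / (s + 1)) := by
        rw [integral_add hYqξ (integrable_const _), integral_add (hY _) hqξ, integral_const_mul]
        simp
    _ ≤ ∫ ω, euclNorm (Y (s + n) ω) ^ 2 ∂μ + 4 * K * (K * β) * δ
          + 11 * (K * β) ^ 2 * (n / (s + 1)) := by linarith

lemma integral_euclNorm_drivenSum_sq_le_harmonic (hG : ∀ t, StronglyMeasurable[𝓕 t] (G t))
    (hD : ∀ t, StronglyMeasurable[𝓕 (t + 1)] (D t)) (hξ : ∀ t, StronglyMeasurable[𝓕 (t + 1)] (ξ t))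
    (hGD : ∀ᵐ ω ∂μ, SlowlyVarying K (G · ω) (D · ω)) (hξβ : ∀ᵐ ω ∂μ, ∀ t, euclNorm (ξ t ω) ≤ β)
    {τ : ℕ} (hτ : 1 ≤ τ) (hmix : ∀ t, 1 ≤ t →
      ∀ᵐ ω ∂μ, euclNorm (fun i => (μ[fun ω' => ξ (t + τ) ω' i | 𝓕 t]) ω) ≤ δ) (n : ℕ) :
    ∫ ω, euclNorm (drivenSum (D · ω) (ξ · ω) (n + 1 + τ)) ^ 2 ∂μ ≤
      11 * (K * β) ^ 2 * (τ * (1 + harmonic (n + 1))) + 4 * K * (K * β) * δ * n := by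
  induction n with
  | zero =>
    have hbase := integral_euclNorm_drivenSum_sq_le (hGD.mono fun ω hω => hω.norm_le') hξβ (1 + τ)
    have hτ' : (1 : ℝ) ≤ τ := mod_cast hτ
    simp only [zero_add, harmonic_succ, harmonic_zero]
    push_cast at hbase ⊢
    nlinarith [sq_nonneg (K * β)]
  | succ n ih =>
    have hstep := integral_euclNorm_drivenSum_succ_sq_le hG hD hξ hGD hξβ hτ
      (hmix (n + 1) (Nat.le_add_left 1 n))
    rw [show n + 1 + 1 + τ = n + 1 + τ + 1 by ring, harmonic_succ (n + 1)]
    push_cast at hstep ⊢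
    rw [div_eq_mul_inv] at hstep
    linarith

theorem integral_euclNorm_drivenSum_sq_le_of_mixing (hG : ∀ t, StronglyMeasurable[𝓕 t] (G t))
    (hD : ∀ t, StronglyMeasurable[𝓕 (t + 1)] (D t)) (hξ : ∀ t, StronglyMeasurable[𝓕 (t + 1)] (ξ t))
    (hGD : ∀ᵐ ω ∂μ, SlowlyVarying K (G · ω) (D · ω)) (hξβ : ∀ᵐ ω ∂μ, ∀ t, euclNorm (ξ t ω) ≤ β)
    {τ : ℕ} (hτ : 1 ≤ τ) (hmix : ∀ t, 1 ≤ t →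
      ∀ᵐ ω ∂μ, euclNorm (fun i => (μ[fun ω' => ξ (t + τ) ω' i | 𝓕 t]) ω) ≤ δ) {T : ℕ}
    (hT : τ + 1 ≤ T) :
    ∫ ω, euclNorm (drivenSum (D · ω) (ξ · ω) T) ^ 2 ∂μ ≤
      22 * (K * β) ^ 2 * (τ * (1 + Real.log T)) + 4 * K * (K * β) * δ * T := by
  obtain ⟨n, rfl⟩ : ∃ n, T = n + 1 + τ := ⟨T - (τ + 1), by omega⟩
  obtain ⟨ω, hω, hξω⟩ := (hGD.and hξβ).exists
  have hKβ := mul_nonneg_of_gain_bounds hω.norm_le' hξω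
  have hK : 0 ≤ K := by simpa using (norm_nonneg _).trans (hω.norm_le 0)
  have hδ : 0 ≤ δ := (hmix 1 le_rfl).exists.elim fun _ hω => (euclNorm_nonneg _).trans hω
  have hlog : 0 ≤ Real.log (n + 1 + τ : ℕ) := Real.log_natCast_nonneg _
  have hharm : (1 : ℝ) + harmonic (n + 1) ≤ 2 * (1 + Real.log (n + 1 + τ : ℕ)) := by
    have hmono : Real.log (n + 1 : ℕ) ≤ Real.log (n + 1 + τ : ℕ) :=
      Real.log_le_log (by positivity) (by gcongr; simp)
    linarith [harmonic_le_one_add_log (n + 1)]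
  calc ∫ ω, euclNorm (drivenSum (D · ω) (ξ · ω) (n + 1 + τ)) ^ 2 ∂μ
      ≤ 11 * (K * β) ^ 2 * (τ * (1 + harmonic (n + 1))) + 4 * K * (K * β) * δ * n :=
        integral_euclNorm_drivenSum_sq_le_harmonic hG hD hξ hGD hξβ hτ hmix n
    _ ≤ 11 * (K * β) ^ 2 * (τ * (2 * (1 + Real.log (n + 1 + τ : ℕ))))
          + 4 * K * (K * β) * δ * (n + 1 + τ : ℕ) := by
        gcongr
        linarith [Nat.cast_nonneg (α := ℝ) τ]
    _ = _ := by ring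

end Ergodic

section Noise

lemma integrable_euclNorm_sq_of_memLp {x : Ω → ι → ℝ} (hx : ∀ i, MemLp (fun ω => x ω i) 2 μ) :
    Integrable (fun ω => euclNorm (x ω) ^ 2) μ := by
  simp only [euclNorm_sq, dotProduct, ← sq]
  exact integrable_finsetSum _ fun i _ => (hx i).integrable_sq

lemma indepFun_apply_of_indep {l : Type*} {𝓖 : MeasurableSpace Ω} {q w : Ω → l → ℝ}
    (hind : Indep (MeasurableSpace.comap w inferInstance) 𝓖 μ) (hq : StronglyMeasurable[𝓖] q)
    (i : l) : IndepFun (fun ω => q ω i) (fun ω => w ω i) μ := by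
  rw [IndepFun_iff_Indep]
  refine indep_of_indep_of_le_left (indep_of_indep_of_le_right hind.symm ?_)
    (measurable_apply hq i).comap_le
  rw [show (fun ω => w ω i) = (fun x : l → ℝ => x i) ∘ w from rfl, ← MeasurableSpace.comap_comp]
  exact MeasurableSpace.comap_mono (measurable_pi_apply i).comap_le

lemma integrable_dotProduct_of_indep {𝓖 : MeasurableSpace Ω} {q w : Ω → κ → ℝ}
    (hind : Indep (MeasurableSpace.comap w inferInstance) 𝓖 μ) (hq : StronglyMeasurable[𝓖] q)
    (hqi : ∀ i, Integrable (fun ω => q ω i) μ) (hwi : ∀ i, Integrable (fun ω => w ω i) μ) :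
    Integrable (fun ω => q ω ⬝ᵥ w ω) μ :=
  integrable_finsetSum _ fun i _ =>
    (indepFun_apply_of_indep hind hq i).integrable_mul (hqi i) (hwi i)

lemma integral_dotProduct_eq_zero_of_indep {𝓖 : MeasurableSpace Ω} {q w : Ω → κ → ℝ}
    (hind : Indep (MeasurableSpace.comap w inferInstance) 𝓖 μ) (hq : StronglyMeasurable[𝓖] q)
    (hqi : ∀ i, Integrable (fun ω => q ω i) μ) (hwi : ∀ i, Integrable (fun ω => w ω i) μ)
    (hw0 : ∀ i, ∫ ω, w ω i ∂μ = 0) : ∫ ω, q ω ⬝ᵥ w ω ∂μ = 0 := by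
  have hindep := indepFun_apply_of_indep hind hq
  have hprod (i : κ) : Integrable (fun ω => q ω i * w ω i) μ :=
    (hindep i).integrable_mul (hqi i) (hwi i)
  simp only [dotProduct]
  rw [integral_finsetSum _ fun i _ => hprod i]
  refine Finset.sum_eq_zero fun i _ => ?_
  rw [(hindep i).integral_fun_mul_eq_mul_integral (hqi i).aestronglyMeasurable
    (hwi i).aestronglyMeasurable, hw0, mul_zero]

lemma ae_euclNorm_mulVec_sq_le [DecidableEq κ] {P : Ω → Matrix ι κ ℝ} {w : Ω → κ → ℝ}
    {c : ℝ} (hPc : ∀ᵐ ω ∂μ, ‖P ω‖ ≤ c) :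
    ∀ᵐ ω ∂μ, euclNorm (P ω *ᵥ w ω) ^ 2 ≤ c ^ 2 * euclNorm (w ω) ^ 2 := by
  filter_upwards [hPc] with ω hω
  rw [← mul_pow]
  exact pow_le_pow_left₀ (euclNorm_nonneg _) ((euclNorm_mulVec_le _ _).trans
    (mul_le_mul_of_nonneg_right hω (euclNorm_nonneg _))) 2

variable [DecidableEq κ] [IsFiniteMeasure μ]

lemma integrable_transpose_mulVec_apply {N : Ω → ι → ℝ} {P : Ω → Matrix ι κ ℝ}
    {c : ℝ} (hN : StronglyMeasurable N) (hP : StronglyMeasurable P)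
    (hNi : Integrable (fun ω => euclNorm (N ω) ^ 2) μ) (hPc : ∀ᵐ ω ∂μ, ‖P ω‖ ≤ c) (i : κ) :
    Integrable (fun ω => ((P ω)ᵀ *ᵥ N ω) i) μ := by
  classical
  have hnorm : Integrable (fun ω => euclNorm (N ω)) μ :=
    ((memLp_two_iff_integrable_sq (stronglyMeasurable_euclNorm hN).aestronglyMeasurable).2
      hNi).integrable one_le_two
  refine (hnorm.const_mul c).mono' (measurable_apply
    (stronglyMeasurable_mulVec (stronglyMeasurable_transpose hP) hN) i).aestronglyMeasurable ?_
  filter_upwards [hPc] with ω hω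
  calc ‖((P ω)ᵀ *ᵥ N ω) i‖ ≤ ‖(P ω)ᵀ‖ * euclNorm (N ω) :=
        (abs_apply_le_euclNorm _ i).trans (euclNorm_mulVec_le _ _)
    _ ≤ c * euclNorm (N ω) := by
        rw [norm_transpose]
        exact mul_le_mul_of_nonneg_right hω (euclNorm_nonneg _)

-- The cross term vanishes because `w` is centered and independent of `𝓖`.
lemma integral_euclNorm_add_mulVec_sq_le {𝓖 : MeasurableSpace Ω} (h𝓖 : 𝓖 ≤ m)
    {N : Ω → ι → ℝ} {P : Ω → Matrix ι κ ℝ} {w : Ω → κ → ℝ} {c : ℝ}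
    (hN : StronglyMeasurable[𝓖] N) (hP : StronglyMeasurable[𝓖] P) (hw : StronglyMeasurable[m] w)
    (hind : Indep (MeasurableSpace.comap w inferInstance) 𝓖 μ)
    (hw2 : ∀ i, MemLp (fun ω => w ω i) 2 μ) (hw0 : ∀ i, ∫ ω, w ω i ∂μ = 0)
    (hNi : Integrable (fun ω => euclNorm (N ω) ^ 2) μ) (hPc : ∀ᵐ ω ∂μ, ‖P ω‖ ≤ c) :
    Integrable (fun ω => euclNorm (N ω + P ω *ᵥ w ω) ^ 2) μ ∧
      ∫ ω, euclNorm (N ω + P ω *ᵥ w ω) ^ 2 ∂μ ≤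
        ∫ ω, euclNorm (N ω) ^ 2 ∂μ + c ^ 2 * ∫ ω, euclNorm (w ω) ^ 2 ∂μ := by
  set q : Ω → κ → ℝ := fun ω => (P ω)ᵀ *ᵥ N ω
  have hq : StronglyMeasurable[𝓖] q :=
    stronglyMeasurable_mulVec (stronglyMeasurable_transpose hP) hN
  have hqi := integrable_transpose_mulVec_apply (hN.mono h𝓖) (hP.mono h𝓖) hNi hPc
  have hwi (i : κ) : Integrable (fun ω => w ω i) μ := (hw2 i).integrable one_le_two
  have hcross : Integrable (fun ω => 2 * (q ω ⬝ᵥ w ω)) μ :=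
    (integrable_dotProduct_of_indep hind hq hqi hwi).const_mul 2
  have hcw := (integrable_euclNorm_sq_of_memLp hw2).const_mul (c ^ 2)
  have hPw := ae_euclNorm_mulVec_sq_le (w := w) hPc
  have hPwi : Integrable (fun ω => euclNorm (P ω *ᵥ w ω) ^ 2) μ := by
    refine hcw.mono' ((stronglyMeasurable_euclNorm
      (stronglyMeasurable_mulVec (hP.mono h𝓖) hw)).pow 2).aestronglyMeasurable ?_
    filter_upwards [hPw] with ω hω
    rwa [Real.norm_of_nonneg (sq_nonneg _)]
  have hexpand (ω : Ω) : euclNorm (N ω + P ω *ᵥ w ω) ^ 2 =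
      euclNorm (N ω) ^ 2 + 2 * (q ω ⬝ᵥ w ω) + euclNorm (P ω *ᵥ w ω) ^ 2 := by
    rw [euclNorm_add_sq, Matrix.dotProduct_mulVec, ← Matrix.mulVec_transpose]
  have hNq : Integrable (fun ω => euclNorm (N ω) ^ 2 + 2 * (q ω ⬝ᵥ w ω)) μ := hNi.add hcross
  simp only [hexpand]
  refine ⟨hNq.add hPwi, ?_⟩
  rw [integral_add hNq hPwi, integral_add hNi hcross, integral_const_mul,
    integral_dotProduct_eq_zero_of_indep hind hq hqi hwi hw0, mul_zero, add_zero,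
    ← integral_const_mul]
  exact add_le_add_right (integral_mono_ae hPwi hcw hPw) _

theorem integral_euclNorm_drivenSum_sq_le_of_indep {𝓕 : Filtration ℕ m}
    {𝓖 : ℕ → MeasurableSpace Ω} (h𝓕𝓖 : ∀ t, 𝓕 t ≤ 𝓖 t) (h𝓖𝓕 : ∀ t, 𝓖 t ≤ 𝓕 (t + 1))
    {P : ℕ → Ω → Matrix ι κ ℝ} {w : ℕ → Ω → κ → ℝ} {c W : ℝ}
    (hP : ∀ t, StronglyMeasurable[𝓖 t] (P t)) (hw : ∀ t, StronglyMeasurable[𝓕 (t + 1)] (w t))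
    (hind : ∀ t, Indep (MeasurableSpace.comap (w t) inferInstance) (𝓖 t) μ)
    (hw2 : ∀ t i, MemLp (fun ω => w t ω i) 2 μ) (hw0 : ∀ t i, ∫ ω, w t ω i ∂μ = 0)
    (hW : ∀ t, ∫ ω, euclNorm (w t ω) ^ 2 ∂μ ≤ W)
    (hPc : ∀ᵐ ω ∂μ, ∀ t : ℕ, ‖P t ω‖ ≤ c / √(t + 1)) (t : ℕ) :
    Integrable (fun ω => euclNorm (drivenSum (P · ω) (w · ω) t) ^ 2) μ ∧
      ∫ ω, euclNorm (drivenSum (P · ω) (w · ω) t) ^ 2 ∂μ ≤ c ^ 2 * W * harmonic t := by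
  induction t with
  | zero => simp [drivenSum, euclNorm_zero]
  | succ t ih =>
    have hle : 𝓖 t ≤ m := (h𝓖𝓕 t).trans (𝓕.le _)
    have hN : StronglyMeasurable[𝓖 t] fun ω => drivenSum (P · ω) (w · ω) t :=
      (stronglyMeasurable_drivenSum (fun s => (hP s).mono (h𝓖𝓕 s)) hw t).mono (h𝓕𝓖 t)
    obtain ⟨hintegrable, hle⟩ := integral_euclNorm_add_mulVec_sq_le hle hN (hP t)
      ((hw t).mono (𝓕.le _)) (hind t) (hw2 t) (hw0 t) ih.1 (hPc.mono fun _ hω => hω t)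
    simp only [drivenSum_succ]
    refine ⟨hintegrable, hle.trans ?_⟩
    rw [div_pow, Real.sq_sqrt (by positivity), harmonic_succ]
    push_cast
    calc _ ≤ c ^ 2 * W * harmonic t + c ^ 2 / (t + 1) * W := by
          gcongr
          exacts [ih.2, hW t]
      _ = c ^ 2 * W * (harmonic t + (t + 1 : ℝ)⁻¹) := by ring

end Noise

end SecondMoment

/-! ### The ensemble and the limiting objective -/

section Ensemble

variable {d J : ℕ}

lemma ensMean_affine (hJ : 0 < J) {z z' : Fin J → Fin d → ℝ} {Q : Matrix (Fin d) (Fin d) ℝ}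
    {b : Fin d → ℝ} (hz : ∀ j, z' j = Q *ᵥ z j + b) : ensMean J z' = Q *ᵥ ensMean J z + b := by
  have hJ' : (J : ℝ) ≠ 0 := by positivity
  simp only [ensMean, hz, Finset.sum_add_distrib, smul_add, Matrix.mulVec_smul, Matrix.mulVec_sum]
  simp [← Nat.cast_smul_eq_nsmul ℝ, smul_smul, hJ']

lemma ensSpread_affine (hJ : 0 < J) {z z' : Fin J → Fin d → ℝ} {Q : Matrix (Fin d) (Fin d) ℝ}
    {b : Fin d → ℝ} (hz : ∀ j, z' j = Q *ᵥ z j + b) (j : Fin J) :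
    ensSpread J z' j = Q *ᵥ ensSpread J z j := by
  rw [ensSpread, ensSpread, ensMean_affine hJ hz, hz, Matrix.mulVec_sub, add_sub_add_right_eq_sub]

lemma ensCov_affine (hJ : 0 < J) {z z' : Fin J → Fin d → ℝ} {Q : Matrix (Fin d) (Fin d) ℝ}
    {b : Fin d → ℝ} (hz : ∀ j, z' j = Q *ᵥ z j + b) : ensCov J z' = Q * ensCov J z * Qᵀ := by
  simp only [ensCov, ensSpread_affine hJ hz, Matrix.mul_smul, Matrix.smul_mul, Matrix.mul_sum,
    Matrix.sum_mul, Matrix.mul_vecMulVec, Matrix.vecMulVec_mul, Matrix.vecMul_transpose]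

lemma posSemidef_ensCov (z : Fin J → Fin d → ℝ) : (ensCov J z).PosSemidef := by
  refine Matrix.PosSemidef.smul (Matrix.posSemidef_sum _ fun j _ => ?_) (by positivity)
  simpa using Matrix.posSemidef_vecMulVec_self_star (ensSpread J z j)

lemma dotProduct_vecMulVec_mulVec (x y : Fin d → ℝ) : x ⬝ᵥ (vecMulVec y y *ᵥ x) = (x ⬝ᵥ y) ^ 2 := by
  rw [Matrix.vecMulVec_mulVec, op_smul_eq_smul, dotProduct_smul, smul_eq_mul, dotProduct_comm y, sq]

lemma norm_ensCov_le (z : Fin J → Fin d → ℝ) : ‖ensCov J z‖ ≤ ensEnergy J z := by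
  have hE : 0 ≤ ensEnergy J z := by
    simp only [ensEnergy, ← euclNorm_sq_eq_enormSq]
    positivity
  refine norm_le_of_posSemidef (posSemidef_ensCov z) hE fun x => ?_
  rw [ensCov, ensEnergy, Matrix.smul_mulVec, dotProduct_smul, smul_eq_mul, mul_assoc,
    Matrix.sum_mulVec, dotProduct_sum, Finset.sum_mul]
  refine mul_le_mul_of_nonneg_left (Finset.sum_le_sum fun j _ => ?_) (by positivity)
  rw [dotProduct_vecMulVec_mulVec, ← euclNorm_sq_eq_enormSq, ← mul_pow, mul_comm, ← sq_abs]
  exact pow_le_pow_left₀ (abs_nonneg _) (abs_dotProduct_le _ _) 2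

variable {Ω : Type*} {m : MeasurableSpace Ω} {z : Ω → Fin J → Fin d → ℝ}

lemma stronglyMeasurable_ensMean (hz : ∀ j, StronglyMeasurable fun ω => z ω j) :
    StronglyMeasurable fun ω => ensMean J (z ω) := by
  have hsum : StronglyMeasurable fun ω => ∑ j, z ω j :=
    Finset.stronglyMeasurable_fun_sum _ fun j _ => hz j
  exact hsum.const_smul (J : ℝ)⁻¹

lemma stronglyMeasurable_ensCov (hz : ∀ j, StronglyMeasurable fun ω => z ω j) :
    StronglyMeasurable fun ω => ensCov J (z ω) := by
  have hspread (j : Fin J) : StronglyMeasurable fun ω => ensSpread J (z ω) j :=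
    (hz j).sub (stronglyMeasurable_ensMean hz)
  have hsum : StronglyMeasurable fun ω =>
      ∑ j, vecMulVec (ensSpread J (z ω) j) (ensSpread J (z ω) j) :=
    Finset.stronglyMeasurable_fun_sum _ fun j _ =>
      (continuous_id.matrix_vecMulVec continuous_id).comp_stronglyMeasurable (hspread j)
  exact hsum.const_smul (J : ℝ)⁻¹

lemma integrable_euclNorm_ensMean_sub_sq {μ : Measure Ω} [IsFiniteMeasure μ]
    (hz : ∀ j i, Measurable fun ω => z ω j i)
    (hz2 : ∀ j, Integrable (fun ω => enormSq (z ω j)) μ) (o : Fin d → ℝ) :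
    Integrable (fun ω => euclNorm (ensMean J (z ω) - o) ^ 2) μ := by
  have hmem (j : Fin J) (i : Fin d) : MemLp (fun ω => z ω j i) 2 μ := by
    rw [memLp_two_iff_integrable_sq (hz j i).aestronglyMeasurable]
    refine (hz2 j).mono' ((hz j i).pow_const 2).aestronglyMeasurable (.of_forall fun ω => ?_)
    rw [Real.norm_of_nonneg (sq_nonneg _)]
    exact Finset.single_le_sum (f := fun i => z ω j i ^ 2) (fun _ _ => sq_nonneg _)
      (Finset.mem_univ i)
  refine integrable_euclNorm_sq_of_memLp fun i => ?_
  simp only [ensMean, Pi.sub_apply, Pi.smul_apply, Finset.sum_apply, smul_eq_mul]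
  exact ((memLp_finsetSum _ fun j _ => hmem j i).const_mul _).sub (memLp_const _)

end Ensemble

section Tikhonov

variable {d : ℕ} {A : Matrix (Fin d) (Fin d) ℝ} {α : ℝ}

lemma mulVec_limOpt_sub_add_smul_limOpt (hA : A.PosSemidef) (hα : 0 < α) (zstar : Fin d → ℝ) :
    A *ᵥ (limOpt A α zstar - zstar) + α • limOpt A α zstar = 0 := by
  have hpos : (A + α • (1 : Matrix (Fin d) (Fin d) ℝ)).PosDef :=
    (Matrix.PosDef.one.smul hα).posSemidef_add hA
  have hopt : (A + α • (1 : Matrix (Fin d) (Fin d) ℝ)) *ᵥ limOpt A α zstar = A *ᵥ zstar := by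
    rw [limOpt, Matrix.mulVec_mulVec,
      Matrix.mul_nonsing_inv _ ((Matrix.isUnit_iff_isUnit_det _).1 hpos.isUnit), Matrix.one_mulVec]
  rw [Matrix.add_mulVec, Matrix.smul_mulVec, Matrix.one_mulVec] at hopt
  rw [Matrix.mulVec_sub, sub_add_eq_add_sub, hopt, sub_self]

lemma limObj_nonneg (hA : A.PosSemidef) (hα : 0 ≤ α) (zstar z : Fin d → ℝ) :
    0 ≤ limObj A α zstar z := by
  have hquad := dotProduct_mulVec_nonneg hA (z - zstar)
  rw [limObj, ← euclNorm_sq_eq_enormSq]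
  positivity

lemma limObj_eq_limObj_limOpt_add (hA : A.PosSemidef) (hα : 0 < α) (zstar z : Fin d → ℝ) :
    limObj A α zstar z = limObj A α zstar (limOpt A α zstar)
      + 1 / 2 * ((z - limOpt A α zstar) ⬝ᵥ (A *ᵥ (z - limOpt A α zstar)))
      + α / 2 * euclNorm (z - limOpt A α zstar) ^ 2 := by
  have hopt := mulVec_limOpt_sub_add_smul_limOpt hA hα zstar
  set o := limOpt A α zstar
  obtain ⟨n, rfl⟩ : ∃ n, z = o + n := ⟨z - o, (add_sub_cancel _ _).symm⟩
  have hfirst : n ⬝ᵥ (A *ᵥ (o - zstar)) + α * (n ⬝ᵥ o) = 0 := by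
    rw [← smul_eq_mul, ← dotProduct_smul, ← dotProduct_add, hopt, dotProduct_zero]
  have hsymm : (o - zstar) ⬝ᵥ (A *ᵥ n) = n ⬝ᵥ (A *ᵥ (o - zstar)) := by
    rw [Matrix.dotProduct_mulVec, ← Matrix.mulVec_transpose, transpose_eq_of_posSemidef hA,
      dotProduct_comm]
  rw [limObj, limObj, ← euclNorm_sq_eq_enormSq, ← euclNorm_sq_eq_enormSq, euclNorm_add_sq,
    add_sub_cancel_left, add_sub_right_comm, Matrix.mulVec_add, add_dotProduct, dotProduct_add,
    dotProduct_add, hsymm, dotProduct_comm o n]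
  linarith

lemma limObj_le_limObj_limOpt_add (hA : A.PosSemidef) (hα : 0 < α) (zstar z : Fin d → ℝ) :
    limObj A α zstar z ≤ limObj A α zstar (limOpt A α zstar)
      + (‖A‖ + α) / 2 * euclNorm (z - limOpt A α zstar) ^ 2 := by
  rw [limObj_eq_limObj_limOpt_add hA hα]
  linarith [dotProduct_mulVec_le A (z - limOpt A α zstar)]

end Tikhonov

/-! ### Sample paths of the ensemble -/

section Path

variable {d p J : ℕ}

/-- The Hessian `Sᵀ S + α` of the Tikhonov functional `½‖S x - u‖² + (α/2)‖x‖²` minimized in the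
step from time `t` to time `t + 1`, which uses the operator `S (t + 1)`. -/
def stepHessian (α : ℝ) (S : ℕ → Matrix (Fin p) (Fin d) ℝ) (t : ℕ) : Matrix (Fin d) (Fin d) ℝ :=
  (S (t + 1))ᵀ * S (t + 1) + α • 1

/-- The deviation `(Sᵀ S - A) v` of the operator `S (t + 1)` from its ergodic limit `A`, in the
direction `v`. -/
def obsFluctuation (A : Matrix (Fin d) (Fin d) ℝ) (v : Fin d → ℝ)
    (S : ℕ → Matrix (Fin p) (Fin d) ℝ) (t : ℕ) : Fin d → ℝ :=
  ((S (t + 1))ᵀ * S (t + 1) - A) *ᵥ v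

/-- The gain `D_t Sᵀ` through which the observation noise `w (t + 1)` enters the ensemble mean. -/
def noiseGain (h α : ℝ) (C₀ : Matrix (Fin d) (Fin d) ℝ) (S : ℕ → Matrix (Fin p) (Fin d) ℝ) (t : ℕ) :
    Matrix (Fin d) (Fin p) ℝ :=
  implicitGain h C₀ (stepHessian α S) t * (S (t + 1))ᵀ

/-- The ensemble Kalman recursion along one sample path, with observation operators `S` and
observations `u`. -/
def IsDekiPath (h α : ℝ) (S : ℕ → Matrix (Fin p) (Fin d) ℝ) (u : ℕ → Fin p → ℝ)
    (z : ℕ → Fin J → Fin d → ℝ) : Prop :=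
  ∀ t j, z (t + 1) j = z t j -
    h • (ensCov J (z t) *ᵥ ((S (t + 1))ᵀ *ᵥ (S (t + 1) *ᵥ z t j - u (t + 1)) + α • z t j))

variable {h α a σ θ κ : ℝ} {A : Matrix (Fin d) (Fin d) ℝ} {zstar : Fin d → ℝ}
  {S : ℕ → Matrix (Fin p) (Fin d) ℝ} {u w : ℕ → Fin p → ℝ} {z : ℕ → Fin J → Fin d → ℝ}

lemma norm_transpose_le_sqrt {M : Matrix (Fin p) (Fin d) ℝ} (hM : opNorm (Mᵀ * M) ≤ a) :
    ‖Mᵀ‖ ≤ √a := by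
  rw [norm_transpose]
  exact Real.le_sqrt_of_sq_le (norm_sq_eq_norm_transpose_mul_self M ▸ hM)

lemma euclNorm_obsFluctuation_le (hS : ∀ t, opNorm ((S t)ᵀ * S t) ≤ a) (v : Fin d → ℝ) (t : ℕ) :
    euclNorm (obsFluctuation A v S t) ≤ (a + ‖A‖) * euclNorm v :=
  (euclNorm_mulVec_le _ v).trans (mul_le_mul_of_nonneg_right
    ((norm_sub_le _ _).trans (add_le_add_left (hS (t + 1)) _)) (euclNorm_nonneg v))

lemma norm_noiseGain_le {C₀ : Matrix (Fin d) (Fin d) ℝ} (hS : ∀ t, opNorm ((S t)ᵀ * S t) ≤ a)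
    {t : ℕ} (hD : ‖implicitGain h C₀ (stepHessian α S) t‖ ≤ κ / √(t + 1)) :
    ‖noiseGain h α C₀ S t‖ ≤ κ * √a / √(t + 1) := by
  rw [mul_div_right_comm]
  exact (Matrix.l2_opNorm_mul _ _).trans (mul_le_mul hD (norm_transpose_le_sqrt (hS (t + 1)))
    (norm_nonneg _) ((norm_nonneg _).trans hD))

lemma isAdmissible_stepHessian (hh : 0 < h) (ha : 0 ≤ a) (hα : 0 < α)
    {z₀ : Fin J → Fin d → ℝ}
    (hσ : (ensCov J z₀ - σ • (1 : Matrix (Fin d) (Fin d) ℝ)).PosSemidef)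
    (hθ : h * (a + α) * ensEnergy J z₀ ≤ θ) (hS : ∀ t, opNorm ((S t)ᵀ * S t) ≤ a) :
    IsAdmissible α (a + α) σ (θ / (h * (a + α))) (ensCov J z₀) (stepHessian α S) where
  posSemidef_init := posSemidef_ensCov z₀
  coercive_init x := by
    have hx := dotProduct_mulVec_nonneg hσ x
    rw [Matrix.sub_mulVec, Matrix.smul_mulVec, Matrix.one_mulVec, dotProduct_sub, dotProduct_smul,
      ← euclNorm_sq, smul_eq_mul] at hx
    linarith
  norm_init_le := (norm_ensCov_le z₀).trans ((le_div_iff₀' (by positivity)).2 hθ)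
  posSemidef t := (Matrix.posSemidef_conjTranspose_mul_self (S (t + 1))).add
    (Matrix.PosSemidef.one.smul hα.le)
  coercive t x := by
    have hx := dotProduct_mulVec_nonneg (Matrix.posSemidef_conjTranspose_mul_self (S (t + 1))) x
    rw [stepHessian, Matrix.add_mulVec, Matrix.smul_mulVec, Matrix.one_mulVec, dotProduct_add,
      dotProduct_smul, ← euclNorm_sq, smul_eq_mul]
    exact le_add_of_nonneg_left hx
  norm_le t := by
    refine (norm_add_le _ _).trans (add_le_add (hS (t + 1)) ?_)
    rw [norm_smul, Real.norm_of_nonneg hα.le]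
    exact mul_le_of_le_one_right hα.le norm_one_le

namespace IsDekiPath

lemma apply_succ (hz : IsDekiPath h α S u z) (t : ℕ) (j : Fin J) :
    z (t + 1) j = (1 - h • (ensCov J (z t) * stepHessian α S t)) *ᵥ z t j
      + h • (ensCov J (z t) *ᵥ ((S (t + 1))ᵀ *ᵥ u (t + 1))) := by
  rw [hz t j, stepHessian, Matrix.sub_mulVec, Matrix.one_mulVec, Matrix.smul_mulVec,
    ← Matrix.mulVec_mulVec, Matrix.add_mulVec, Matrix.smul_mulVec, Matrix.one_mulVec,
    ← Matrix.mulVec_mulVec, Matrix.mulVec_sub, sub_add_eq_add_sub, Matrix.mulVec_sub, smul_sub]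
  abel

lemma ensCov_eq_covariance (hJ : 0 < J) (hz : IsDekiPath h α S u z) (t : ℕ) :
    ensCov J (z t) = covariance h (ensCov J (z 0)) (stepHessian α S) t := by
  induction t with
  | zero => rw [covariance_zero]
  | succ t ih => rw [ensCov_affine hJ (hz.apply_succ t), ih, covariance_succ]

-- The first-order condition at `limOpt` turns the constant forcing into `obsFluctuation`.
lemma ensMean_succ_sub_limOpt (hJ : 0 < J) (hA : A.PosSemidef) (hα : 0 < α)
    (hz : IsDekiPath h α S (fun t => S t *ᵥ zstar + w t) z) (t : ℕ) :
    ensMean J (z (t + 1)) - limOpt A α zstar =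
      (1 - h • (ensCov J (z t) * stepHessian α S t)) *ᵥ (ensMean J (z t) - limOpt A α zstar)
        - h • (ensCov J (z t) *ᵥ (obsFluctuation A (limOpt A α zstar - zstar) S t
          - (S (t + 1))ᵀ *ᵥ w (t + 1))) := by
  have hopt := mulVec_limOpt_sub_add_smul_limOpt hA hα zstar
  rw [ensMean_affine hJ (hz.apply_succ t)]
  set o := limOpt A α zstar
  set M := S (t + 1) with hM
  have hforcing : obsFluctuation A (o - zstar) S t - Mᵀ *ᵥ w (t + 1) =
      stepHessian α S t *ᵥ o - Mᵀ *ᵥ (M *ᵥ zstar + w (t + 1)) := by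
    rw [obsFluctuation, stepHessian, ← hM, Matrix.sub_mulVec, eq_neg_of_add_eq_zero_left hopt,
      Matrix.add_mulVec, Matrix.smul_mulVec, Matrix.one_mulVec, Matrix.mulVec_sub,
      Matrix.mulVec_add, Matrix.mulVec_mulVec]
    abel
  rw [hforcing, Matrix.mulVec_sub _ (ensMean J (z t)) o, Matrix.sub_mulVec _ _ o, Matrix.one_mulVec,
    Matrix.smul_mulVec _ _ o, Matrix.mulVec_sub (ensCov J (z t)), smul_sub]
  simp only [Matrix.mulVec_mulVec]
  abel

lemma ensMean_sub_limOpt_eq (hJ : 0 < J) (hA : A.PosSemidef) (hα : 0 < α)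
    (hz : IsDekiPath h α S (fun t => S t *ᵥ zstar + w t) z)
    (hunit : ∀ t, IsUnit (1 - h • (stepHessian α S t *
      covariance h (ensCov J (z 0)) (stepHessian α S) t)).det) (t : ℕ) :
    ensMean J (z t) - limOpt A α zstar =
      transition h (ensCov J (z 0)) (stepHessian α S) t *ᵥ (ensMean J (z 0) - limOpt A α zstar
        - h • (drivenSum (implicitGain h (ensCov J (z 0)) (stepHessian α S))
            (obsFluctuation A (limOpt A α zstar - zstar) S) t
          - drivenSum (noiseGain h α (ensCov J (z 0)) S) (fun s => w (s + 1)) t)) := by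
  have hrec := fun s => hz.ensCov_eq_covariance hJ s ▸ hz.ensMean_succ_sub_limOpt hJ hA hα s
  have hnoise : drivenSum (noiseGain h α (ensCov J (z 0)) S) (fun s => w (s + 1)) t =
      drivenSum (implicitGain h (ensCov J (z 0)) (stepHessian α S))
        (fun s => (S (s + 1))ᵀ *ᵥ w (s + 1)) t := by
    simp only [drivenSum, noiseGain, Matrix.mulVec_mulVec]
  rw [hnoise, ← drivenSum_sub]
  exact affineRecursion_eq_transition_mulVec (m := fun t => ensMean J (z t) - limOpt A α zstar)
    hunit hrec t

lemma euclNorm_ensMean_sub_limOpt_sq_le (hJ : 0 < J) (hA : A.PosSemidef) (hα : 0 < α)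
    (hz : IsDekiPath h α S (fun t => S t *ᵥ zstar + w t) z)
    (hunit : ∀ t, IsUnit (1 - h • (stepHessian α S t *
      covariance h (ensCov J (z 0)) (stepHessian α S) t)).det) {t : ℕ}
    (hκ : ‖transition h (ensCov J (z 0)) (stepHessian α S) t‖ ≤ κ / √(t + 1)) :
    euclNorm (ensMean J (z t) - limOpt A α zstar) ^ 2 ≤
      3 * κ ^ 2 / (t + 1) * (euclNorm (ensMean J (z 0) - limOpt A α zstar) ^ 2
        + h ^ 2 * euclNorm (drivenSum (implicitGain h (ensCov J (z 0)) (stepHessian α S))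
            (obsFluctuation A (limOpt A α zstar - zstar) S) t) ^ 2
        + h ^ 2 * euclNorm (drivenSum (noiseGain h α (ensCov J (z 0)) S)
            (fun s => w (s + 1)) t) ^ 2) := by
  rw [hz.ensMean_sub_limOpt_eq hJ hA hα hunit]
  set x := ensMean J (z 0) - limOpt A α zstar
  set X := drivenSum (implicitGain h (ensCov J (z 0)) (stepHessian α S)) _ t
  set N := drivenSum (noiseGain h α (ensCov J (z 0)) S) _ t
  have hsplit : euclNorm (x - h • (X - N)) ≤ euclNorm x + |h| * euclNorm X + |h| * euclNorm N := by
    have hXN := mul_le_mul_of_nonneg_left (euclNorm_sub_le X N) (abs_nonneg h)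
    have hx := euclNorm_sub_le x (h • (X - N))
    rw [euclNorm_smul] at hx
    linarith
  have hsq : euclNorm (x - h • (X - N)) ^ 2 ≤
      3 * (euclNorm x ^ 2 + h ^ 2 * euclNorm X ^ 2 + h ^ 2 * euclNorm N ^ 2) := by
    refine (pow_le_pow_left₀ (euclNorm_nonneg _) hsplit 2).trans ?_
    rw [← sq_abs h]
    nlinarith [sq_nonneg (euclNorm x - |h| * euclNorm X), sq_nonneg (euclNorm x - |h| * euclNorm N),
      sq_nonneg (|h| * euclNorm X - |h| * euclNorm N)]
  calc _ ≤ (κ / √(t + 1) * euclNorm (x - h • (X - N))) ^ 2 :=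
        pow_le_pow_left₀ (euclNorm_nonneg _) ((euclNorm_mulVec_le _ _).trans
          (mul_le_mul_of_nonneg_right hκ (euclNorm_nonneg _))) 2
    _ = κ ^ 2 / (t + 1) * euclNorm (x - h • (X - N)) ^ 2 := by
        rw [mul_pow, div_pow, Real.sq_sqrt (by positivity)]
    _ ≤ κ ^ 2 / (t + 1) *
          (3 * (euclNorm x ^ 2 + h ^ 2 * euclNorm X ^ 2 + h ^ 2 * euclNorm N ^ 2)) := by gcongr
    _ = _ := by ring

end IsDekiPath

end Path

/-! ### The stochastic ensemble -/

section Stochastic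

variable {d p J : ℕ} {Ω : Type*} {m : MeasurableSpace Ω}

/-- The information `𝓖_t` from which the noise `w (t + 1)` is independent: the past `𝓕 t` together
with the observation operator `S (t + 1)`. -/
abbrev preNoiseSigma (𝓕 : Filtration ℕ m) (S : ℕ → Ω → Matrix (Fin p) (Fin d) ℝ) (t : ℕ) :
    MeasurableSpace Ω :=
  𝓕 t ⊔ MeasurableSpace.comap
    (fun ω (ik : Fin p × Fin d) => S (t + 1) ω ik.1 ik.2) inferInstance

/-- The stochastic DEKI setting with observations `S t *ᵥ zstar + w t`: `‖Sᵀ S‖ ≤ a`, the noise is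
square integrable, centered, of second moment at most `W` and independent of `preNoiseSigma`, and
the initial covariance `C₀` satisfies `σ ≤ C₀`, with energy at most `θ / (h (a + α))`. -/
structure IsDekiProcess (μ : Measure Ω) (𝓕 : Filtration ℕ m) (h α a σ θ W : ℝ)
    (zstar : Fin d → ℝ) (S : ℕ → Ω → Matrix (Fin p) (Fin d) ℝ) (w : ℕ → Ω → Fin p → ℝ)
    (z : ℕ → Ω → Fin J → Fin d → ℝ) : Prop where
  isDekiPath : ∀ ω, IsDekiPath h α (S · ω) (fun t => S t ω *ᵥ zstar + w t ω) (z · ω)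
  measurable_operator : ∀ t i k, Measurable[𝓕 t] fun ω => S t ω i k
  opNorm_le : ∀ t, ∀ᵐ ω ∂μ, opNorm ((S t ω)ᵀ * S t ω) ≤ a
  measurable_noise : ∀ t i, Measurable[𝓕 (t + 1)] fun ω => w (t + 1) ω i
  memLp_noise : ∀ t i, MemLp (fun ω => w (t + 1) ω i) 2 μ
  integral_noise : ∀ t i, ∫ ω, w (t + 1) ω i ∂μ = 0
  integral_noise_sq_le : ∀ t, ∫ ω, enormSq (w (t + 1) ω) ∂μ ≤ W
  indep_noise : ∀ t, Indep (MeasurableSpace.comap (w (t + 1)) inferInstance)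
    (preNoiseSigma 𝓕 S t) μ
  measurable_init : ∀ j i, Measurable[𝓕 0] fun ω => z 0 ω j i
  integrable_init : ∀ j, Integrable (fun ω => enormSq (z 0 ω j)) μ
  coercive_init : ∀ᵐ ω ∂μ,
    (ensCov J (z 0 ω) - σ • (1 : Matrix (Fin d) (Fin d) ℝ)).PosSemidef
  energy_init : ∀ᵐ ω ∂μ, h * (a + α) * ensEnergy J (z 0 ω) ≤ θ

namespace IsDekiProcess

variable {μ : Measure Ω} {𝓕 : Filtration ℕ m} {h α a σ θ W κ ε : ℝ} {zstar : Fin d → ℝ}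
  {S : ℕ → Ω → Matrix (Fin p) (Fin d) ℝ} {w : ℕ → Ω → Fin p → ℝ}
  {z : ℕ → Ω → Fin J → Fin d → ℝ} {A : Matrix (Fin d) (Fin d) ℝ}

section Measurability

lemma stronglyMeasurable_operator (hz : IsDekiProcess μ 𝓕 h α a σ θ W zstar S w z) (t : ℕ) :
    StronglyMeasurable[𝓕 t] (S t) :=
  stronglyMeasurable_matrix (hz.measurable_operator t)

lemma stronglyMeasurable_noise (hz : IsDekiProcess μ 𝓕 h α a σ θ W zstar S w z) (t : ℕ) :
    StronglyMeasurable[𝓕 (t + 1)] (w (t + 1)) :=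
  stronglyMeasurable_vec (hz.measurable_noise t)

lemma stronglyMeasurable_operator_preNoiseSigma (t : ℕ) :
    StronglyMeasurable[preNoiseSigma 𝓕 S t] (S (t + 1)) :=
  stronglyMeasurable_matrix fun i k => ((measurable_pi_apply (i, k)).comp
    (comap_measurable fun ω (ik : Fin p × Fin d) => S (t + 1) ω ik.1 ik.2)).mono le_sup_right le_rfl

lemma preNoiseSigma_le (hz : IsDekiProcess μ 𝓕 h α a σ θ W zstar S w z) (t : ℕ) :
    preNoiseSigma 𝓕 S t ≤ 𝓕 (t + 1) :=
  sup_le (𝓕.mono t.le_succ) (@measurable_pi_lambda _ _ _ (𝓕 (t + 1)) _ _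
    fun ik : Fin p × Fin d => hz.measurable_operator (t + 1) ik.1 ik.2).comap_le

lemma stronglyMeasurable_stepHessian {m' : MeasurableSpace Ω} {t : ℕ}
    (hS : StronglyMeasurable[m'] (S (t + 1))) :
    StronglyMeasurable[m'] fun ω => stepHessian α (S · ω) t :=
  (stronglyMeasurable_matrix_mul (stronglyMeasurable_transpose hS) hS).add stronglyMeasurable_const

lemma stronglyMeasurable_ensCov_init (hz : IsDekiProcess μ 𝓕 h α a σ θ W zstar S w z) :
    StronglyMeasurable[𝓕 0] fun ω => ensCov J (z 0 ω) :=
  stronglyMeasurable_ensCov fun j => stronglyMeasurable_vec (hz.measurable_init j)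

lemma stronglyMeasurable_gain (hz : IsDekiProcess μ 𝓕 h α a σ θ W zstar S w z) (t : ℕ) :
    StronglyMeasurable[𝓕 t] fun ω => gain h (ensCov J (z 0 ω)) (stepHessian α (S · ω)) t :=
  Deki.stronglyMeasurable_gain h hz.stronglyMeasurable_ensCov_init
    (fun t => stronglyMeasurable_stepHessian (hz.stronglyMeasurable_operator (t + 1))) t

lemma stronglyMeasurable_implicitGain (hz : IsDekiProcess μ 𝓕 h α a σ θ W zstar S w z)
    (t : ℕ) : StronglyMeasurable[preNoiseSigma 𝓕 S t] fun ω =>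
      implicitGain h (ensCov J (z 0 ω)) (stepHessian α (S · ω)) t :=
  Deki.stronglyMeasurable_implicitGain h hz.stronglyMeasurable_ensCov_init
    (fun t => stronglyMeasurable_stepHessian (hz.stronglyMeasurable_operator (t + 1)))
    le_sup_left (stronglyMeasurable_stepHessian (stronglyMeasurable_operator_preNoiseSigma t))

lemma stronglyMeasurable_noiseGain (hz : IsDekiProcess μ 𝓕 h α a σ θ W zstar S w z)
    (t : ℕ) : StronglyMeasurable[preNoiseSigma 𝓕 S t] fun ω =>
      noiseGain h α (ensCov J (z 0 ω)) (S · ω) t :=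
  stronglyMeasurable_matrix_mul (hz.stronglyMeasurable_implicitGain t)
    (stronglyMeasurable_transpose (stronglyMeasurable_operator_preNoiseSigma t))

lemma stronglyMeasurable_transpose_mul_self (hz : IsDekiProcess μ 𝓕 h α a σ θ W zstar S w z)
    (t : ℕ) : StronglyMeasurable[𝓕 t] fun ω => (S t ω)ᵀ * S t ω :=
  stronglyMeasurable_matrix_mul (stronglyMeasurable_transpose (hz.stronglyMeasurable_operator t))
    (hz.stronglyMeasurable_operator t)

lemma stronglyMeasurable_obsFluctuation (hz : IsDekiProcess μ 𝓕 h α a σ θ W zstar S w z)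
    (v : Fin d → ℝ) (t : ℕ) :
    StronglyMeasurable[𝓕 (t + 1)] fun ω => obsFluctuation A v (S · ω) t :=
  stronglyMeasurable_mulVec
    ((hz.stronglyMeasurable_transpose_mul_self (t + 1)).sub stronglyMeasurable_const)
    stronglyMeasurable_const

end Measurability

lemma ae_opNorm_le (hz : IsDekiProcess μ 𝓕 h α a σ θ W zstar S w z) :
    ∀ᵐ ω ∂μ, ∀ t, opNorm ((S t ω)ᵀ * S t ω) ≤ a :=
  ae_all_iff.2 hz.opNorm_le

lemma ae_euclNorm_obsFluctuation_le (hz : IsDekiProcess μ 𝓕 h α a σ θ W zstar S w z)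
    (v : Fin d → ℝ) :
    ∀ᵐ ω ∂μ, ∀ t, euclNorm (obsFluctuation A v (S · ω) t) ≤ (a + ‖A‖) * euclNorm v :=
  hz.ae_opNorm_le.mono fun _ hS => euclNorm_obsFluctuation_le hS v

lemma noiseBound_nonneg (hz : IsDekiProcess μ 𝓕 h α a σ θ W zstar S w z) : 0 ≤ W :=
  (integral_nonneg fun _ => Finset.sum_nonneg fun _ _ => sq_nonneg _).trans
    (hz.integral_noise_sq_le 0)

variable [IsProbabilityMeasure μ]

lemma operatorBound_nonneg (hz : IsDekiProcess μ 𝓕 h α a σ θ W zstar S w z) : 0 ≤ a :=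
  (hz.opNorm_le 0).exists.elim fun _ hS => (norm_nonneg _).trans hS

lemma ae_isAdmissible (hz : IsDekiProcess μ 𝓕 h α a σ θ W zstar S w z) (hh : 0 < h)
    (hα : 0 < α) : ∀ᵐ ω ∂μ, IsAdmissible α (a + α) σ (θ / (h * (a + α))) (ensCov J (z 0 ω))
      (stepHessian α (S · ω)) := by
  filter_upwards [hz.ae_opNorm_le, hz.coercive_init, hz.energy_init] with ω hS hσ hθ
  exact isAdmissible_stepHessian hh hz.operatorBound_nonneg hα hσ hθ hS

lemma exists_ae_gain_bound (hz : IsDekiProcess μ 𝓕 h α a σ θ W zstar S w z) (hh : 0 < h)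
    (hα : 0 < α) (hσ : 0 < σ) (hθ : θ < 1) :
    ∃ κ, 0 ≤ κ ∧ ∀ᵐ ω ∂μ,
      (∀ t, IsUnit (1 - h • (stepHessian α (S · ω) t *
        covariance h (ensCov J (z 0 ω)) (stepHessian α (S · ω)) t)).det) ∧
      (∀ t : ℕ, ‖transition h (ensCov J (z 0 ω)) (stepHessian α (S · ω)) t‖ ≤ κ / √(t + 1)) ∧
      SlowlyVarying κ (gain h (ensCov J (z 0 ω)) (stepHessian α (S · ω)))
        (implicitGain h (ensCov J (z 0 ω)) (stepHessian α (S · ω))) := by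
  have hadm := hz.ae_isAdmissible hh hα
  have hL : 0 < a + α := add_pos_of_nonneg_of_pos hz.operatorBound_nonneg hα
  have hstep : h * (θ / (h * (a + α))) * (a + α) < 1 := by
    rwa [show h * (θ / (h * (a + α))) * (a + α) = θ by field_simp]
  obtain ⟨ω, hω⟩ := hadm.exists
  obtain ⟨κ, hκ, hbound⟩ := exists_gain_bound (ι := Fin d) hh hα
    (le_add_of_nonneg_left hz.operatorBound_nonneg) hσ ((norm_nonneg _).trans hω.norm_init_le) hstep
  exact ⟨κ, hκ, hadm.mono fun ω hω => ⟨hω.isUnit_det hh.le hα.le hstep, hbound _ _ hω⟩⟩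

lemma integrable_transpose_mul_self_apply (hz : IsDekiProcess μ 𝓕 h α a σ θ W zstar S w z)
    (t : ℕ) (i k : Fin d) : Integrable (fun ω => ((S t ω)ᵀ * S t ω) i k) μ := by
  have hcol : StronglyMeasurable fun ω => ((S t ω)ᵀ * S t ω) *ᵥ Pi.single k 1 :=
    stronglyMeasurable_mulVec ((hz.stronglyMeasurable_transpose_mul_self t).mono (𝓕.le t))
      stronglyMeasurable_const
  have hintegrable := integrable_of_euclNorm_le hcol (μ := μ) (c := a * euclNorm (Pi.single k 1))
    ((hz.opNorm_le t).mono fun ω hω => (euclNorm_mulVec_le _ _).trans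
      (mul_le_mul_of_nonneg_right hω (euclNorm_nonneg _))) i
  simpa using hintegrable

lemma ae_euclNorm_condExp_obsFluctuation_le
    (hz : IsDekiProcess μ 𝓕 h α a σ θ W zstar S w z) (v : Fin d → ℝ) {s t : ℕ}
    (hmix : ∀ᵐ ω ∂μ, opNorm ((Matrix.of fun i k =>
      (μ[fun ω' => ((S (s + 1) ω')ᵀ * S (s + 1) ω') i k | 𝓕 t]) ω) - A) ≤ ε) :
    ∀ᵐ ω ∂μ, euclNorm (fun i => (μ[fun ω' => obsFluctuation A v (S · ω') s i | 𝓕 t]) ω) ≤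
      ε * euclNorm v := by
  filter_upwards [hmix, euclNorm_condExp_sub_mulVec_le (𝓕.le t)
    (hz.integrable_transpose_mul_self_apply (s + 1)) A v] with ω hω hv
  exact hv.trans (mul_le_mul_of_nonneg_right hω (euclNorm_nonneg v))

lemma integrable_and_integral_fluctuation_sq_le
    (hz : IsDekiProcess μ 𝓕 h α a σ θ W zstar S w z)
    (hκ : ∀ᵐ ω ∂μ, SlowlyVarying κ (gain h (ensCov J (z 0 ω)) (stepHessian α (S · ω)))
      (implicitGain h (ensCov J (z 0 ω)) (stepHessian α (S · ω))))
    (v : Fin d → ℝ) {τ : ℕ} (hτ : 1 ≤ τ)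
    (hmix : ∀ t : ℕ, 1 ≤ t → ∀ᵐ ω ∂μ, opNorm ((Matrix.of fun i k =>
      (μ[fun ω' => ((S (t + 1 + τ) ω')ᵀ * S (t + 1 + τ) ω') i k | 𝓕 t]) ω) - A) ≤ ε)
    {T : ℕ} (hT : τ + 1 ≤ T) :
    Integrable (fun ω => euclNorm (drivenSum (implicitGain h (ensCov J (z 0 ω))
        (stepHessian α (S · ω))) (obsFluctuation A v (S · ω)) T) ^ 2) μ ∧
      ∫ ω, euclNorm (drivenSum (implicitGain h (ensCov J (z 0 ω))
        (stepHessian α (S · ω))) (obsFluctuation A v (S · ω)) T) ^ 2 ∂μ ≤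
          22 * (κ * ((a + ‖A‖) * euclNorm v)) ^ 2 * (τ * (1 + Real.log T))
            + 4 * κ * (κ * ((a + ‖A‖) * euclNorm v)) * (ε * euclNorm v) * T := by
  have hD (t : ℕ) := (hz.stronglyMeasurable_implicitGain t).mono (hz.preNoiseSigma_le t)
  have hξ := hz.stronglyMeasurable_obsFluctuation (A := A) v
  have hξβ := hz.ae_euclNorm_obsFluctuation_le (A := A) v
  refine ⟨integrable_euclNorm_drivenSum_sq hD hξ (hκ.mono fun ω hω => hω.norm_le') hξβ T,
    integral_euclNorm_drivenSum_sq_le_of_mixing hz.stronglyMeasurable_gain hD hξ hκ hξβ hτ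
      (fun t ht => hz.ae_euclNorm_condExp_obsFluctuation_le v ?_) hT⟩
  rw [Nat.add_right_comm]
  exact hmix t ht

lemma integrable_and_integral_noise_sq_le
    (hz : IsDekiProcess μ 𝓕 h α a σ θ W zstar S w z)
    (hκ : ∀ᵐ ω ∂μ, ∀ t : ℕ,
      ‖implicitGain h (ensCov J (z 0 ω)) (stepHessian α (S · ω)) t‖ ≤ κ / √(t + 1)) (T : ℕ) :
    Integrable (fun ω => euclNorm (drivenSum (noiseGain h α (ensCov J (z 0 ω)) (S · ω))
        (fun s => w (s + 1) ω) T) ^ 2) μ ∧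
      ∫ ω, euclNorm (drivenSum (noiseGain h α (ensCov J (z 0 ω)) (S · ω))
        (fun s => w (s + 1) ω) T) ^ 2 ∂μ ≤ (κ * √a) ^ 2 * W * harmonic T := by
  refine integral_euclNorm_drivenSum_sq_le_of_indep (fun t => le_sup_left) hz.preNoiseSigma_le
    hz.stronglyMeasurable_noiseGain hz.stronglyMeasurable_noise hz.indep_noise hz.memLp_noise
    hz.integral_noise (fun t => ?_) ?_ T
  · simpa only [euclNorm_sq_eq_enormSq] using hz.integral_noise_sq_le t
  · filter_upwards [hκ, hz.ae_opNorm_le] with ω hω hS t using norm_noiseGain_le hS (hω t)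

lemma integral_limObj_ensMean_sub_le (hz : IsDekiProcess μ 𝓕 h α a σ θ W zstar S w z)
    (hJ : 0 < J) (hA : A.PosSemidef) (hα : 0 < α)
    (hunit : ∀ᵐ ω ∂μ, ∀ t, IsUnit (1 - h • (stepHessian α (S · ω) t *
      covariance h (ensCov J (z 0 ω)) (stepHessian α (S · ω)) t)).det)
    {T : ℕ} (hκ : ∀ᵐ ω ∂μ,
      ‖transition h (ensCov J (z 0 ω)) (stepHessian α (S · ω)) T‖ ≤ κ / √(T + 1))
    (hX : Integrable (fun ω => euclNorm (drivenSum (implicitGain h (ensCov J (z 0 ω))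
      (stepHessian α (S · ω))) (obsFluctuation A (limOpt A α zstar - zstar) (S · ω)) T) ^ 2) μ)
    (hN : Integrable (fun ω => euclNorm (drivenSum (noiseGain h α (ensCov J (z 0 ω)) (S · ω))
      (fun s => w (s + 1) ω) T) ^ 2) μ) :
    (∫ ω, limObj A α zstar (ensMean J (z T ω)) ∂μ) - limObj A α zstar (limOpt A α zstar) ≤
      (‖A‖ + α) / 2 * (3 * κ ^ 2 / (T + 1)) *
        (∫ ω, euclNorm (ensMean J (z 0 ω) - limOpt A α zstar) ^ 2 ∂μ
          + h ^ 2 * ∫ ω, euclNorm (drivenSum (implicitGain h (ensCov J (z 0 ω))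
              (stepHessian α (S · ω))) (obsFluctuation A (limOpt A α zstar - zstar) (S · ω)) T) ^ 2
              ∂μ
          + h ^ 2 * ∫ ω, euclNorm (drivenSum (noiseGain h α (ensCov J (z 0 ω)) (S · ω))
              (fun s => w (s + 1) ω) T) ^ 2 ∂μ) := by
  have hm := integrable_euclNorm_ensMean_sub_sq (fun j i => (hz.measurable_init j i).mono
    (𝓕.le 0) le_rfl) hz.integrable_init (limOpt A α zstar)
  set x : Ω → ℝ := fun ω => euclNorm (ensMean J (z 0 ω) - limOpt A α zstar) ^ 2
  set X : Ω → ℝ := fun ω => euclNorm (drivenSum (implicitGain h (ensCov J (z 0 ω))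
    (stepHessian α (S · ω))) (obsFluctuation A (limOpt A α zstar - zstar) (S · ω)) T) ^ 2
  set N : Ω → ℝ := fun ω => euclNorm (drivenSum (noiseGain h α (ensCov J (z 0 ω)) (S · ω))
    (fun s => w (s + 1) ω) T) ^ 2
  have hpt : ∀ᵐ ω ∂μ, limObj A α zstar (ensMean J (z T ω)) ≤ limObj A α zstar (limOpt A α zstar)
      + (‖A‖ + α) / 2 * (3 * κ ^ 2 / (T + 1)) * (x ω + h ^ 2 * X ω + h ^ 2 * N ω) := by
    filter_upwards [hunit, hκ] with ω hunit hκ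
    refine (limObj_le_limObj_limOpt_add hA hα zstar _).trans (add_le_add_right ?_ _)
    rw [mul_assoc]
    exact mul_le_mul_of_nonneg_left
      ((hz.isDekiPath ω).euclNorm_ensMean_sub_limOpt_sq_le hJ hA hα hunit hκ) (by positivity)
  have hxX : Integrable (fun ω => x ω + h ^ 2 * X ω) μ := hm.add (hX.const_mul (h ^ 2))
  have hsum : Integrable (fun ω => x ω + h ^ 2 * X ω + h ^ 2 * N ω) μ := hxX.add (hN.const_mul _)
  refine sub_le_iff_le_add'.2 ((integral_mono_of_nonneg (.of_forall fun ω =>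
    limObj_nonneg hA hα.le zstar _) ((integrable_const _).add (hsum.const_mul _)) hpt).trans_eq ?_)
  rw [integral_add' (integrable_const _) (hsum.const_mul _), integral_const, probReal_univ,
    one_smul, integral_const_mul, integral_add hxX (hN.const_mul _),
    integral_add hm (hX.const_mul _), integral_const_mul, integral_const_mul]

-- `k₀` comes from the initial error, `k₁` and `k₂` from the observation operators, `k₃` from the
-- observation noise.
lemma exists_integral_limObj_ensMean_sub_le
    (hz : IsDekiProcess μ 𝓕 h α a σ θ W zstar S w z) (hJ : 0 < J) (hh : 0 < h) (hα : 0 < α)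
    (hσ : 0 < σ) (hθ : θ < 1) (hA : A.PosSemidef) :
    ∃ k₀ k₁ k₂ k₃ : ℝ, 0 ≤ k₀ ∧ 0 ≤ k₁ ∧ 0 ≤ k₂ ∧ 0 ≤ k₃ ∧ ∀ ε, ∀ τ : ℕ, 1 ≤ τ →
      (∀ t : ℕ, 1 ≤ t → ∀ᵐ ω ∂μ, opNorm ((Matrix.of fun i k =>
        (μ[fun ω' => ((S (t + 1 + τ) ω')ᵀ * S (t + 1 + τ) ω') i k | 𝓕 t]) ω) - A) ≤ ε) →
      ∀ T : ℕ, τ + 1 ≤ T →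
        (∫ ω, limObj A α zstar (ensMean J (z T ω)) ∂μ) - limObj A α zstar (limOpt A α zstar) ≤
          (k₀ + k₁ * (τ * (1 + Real.log T)) + k₂ * ε * T + k₃ * harmonic T) / (T + 1) := by
  obtain ⟨κ, hκ, hgain⟩ := hz.exists_ae_gain_bound hh hα hσ hθ
  have ha := hz.operatorBound_nonneg
  have hW := hz.noiseBound_nonneg
  set v := limOpt A α zstar - zstar
  have hv := euclNorm_nonneg v
  set β := κ * ((a + ‖A‖) * euclNorm v) with hβ
  set q := (‖A‖ + α) / 2 * (3 * κ ^ 2) with hq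
  refine ⟨q * ∫ ω, euclNorm (ensMean J (z 0 ω) - limOpt A α zstar) ^ 2 ∂μ,
    q * (h ^ 2 * (22 * β ^ 2)), q * (h ^ 2 * (4 * κ * β * euclNorm v)),
    q * (h ^ 2 * ((κ * √a) ^ 2 * W)),
    mul_nonneg (by positivity) (integral_nonneg fun _ => sq_nonneg _), by positivity,
    by positivity, by positivity, fun ε τ hτ hmix T hT => ?_⟩
  obtain ⟨hX, hXle⟩ := hz.integrable_and_integral_fluctuation_sq_le
    (hgain.mono fun _ hω => hω.2.2) v hτ hmix hT
  obtain ⟨hN, hNle⟩ := hz.integrable_and_integral_noise_sq_le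
    (hgain.mono fun _ hω => hω.2.2.norm_le') T
  refine (hz.integral_limObj_ensMean_sub_le hJ hA hα (hgain.mono fun _ hω => hω.1)
    (hgain.mono fun _ hω => hω.2.1 T) hX hN).trans ?_
  rw [mul_div_assoc', div_mul_eq_mul_div, ← hq]
  rw [← hβ] at hXle
  gcongr ?_ / _
  have hsum := mul_le_mul_of_nonneg_left (add_le_add hXle hNle) (sq_nonneg h)
  linarith [mul_le_mul_of_nonneg_left hsum (by positivity : 0 ≤ q)]

end IsDekiProcess

end Stochastic

/-! ### Rates -/

section Rate

variable {k₀ k₁ k₂ k₃ ε l : ℝ} {τ T : ℕ}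

lemma rate_le (h₀ : 0 ≤ k₀) (h₁ : 0 ≤ k₁) (h₂ : 0 ≤ k₂) (h₃ : 0 ≤ k₃) (hε : 0 ≤ ε) (hτ : 1 ≤ τ)
    (hT : 1 ≤ T) :
    (k₀ + k₁ * (τ * (1 + Real.log T)) + k₂ * ε * T + k₃ * harmonic T) / (T + 1) ≤
      (k₀ + k₁ + k₂ + k₃) * (ε + (1 + τ * (1 + Real.log T)) / T) := by
  have hharm : (harmonic T : ℝ) ≤ τ * (1 + Real.log T) :=
    (harmonic_le_one_add_log T).trans
      (le_mul_of_one_le_left (by positivity) (by exact_mod_cast hτ))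
  set L : ℝ := τ * (1 + Real.log T)
  have hL : 0 ≤ L := by positivity
  calc (k₀ + k₁ * L + k₂ * ε * T + k₃ * harmonic T) / (T + 1)
      ≤ (k₀ * (1 + L) + k₁ * (1 + L) + k₂ * ε * T + k₃ * (1 + L)) / T := by
        gcongr
        · exact le_mul_of_one_le_right h₀ (by linarith)
        · linarith
        · linarith
        · linarith
    _ = k₂ * ε + (k₀ + k₁ + k₃) * ((1 + L) / T) := by field_simp; ring
    _ ≤ (k₀ + k₁ + k₂ + k₃) * ε + (k₀ + k₁ + k₂ + k₃) * ((1 + L) / T) := by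
        exact add_le_add (mul_le_mul_of_nonneg_right (by linarith) hε)
          (mul_le_mul_of_nonneg_right (by linarith) (by positivity))
    _ = (k₀ + k₁ + k₂ + k₃) * (ε + (1 + L) / T) := by ring

lemma one_add_mul_log_div_le_div_rpow (hl : l ≤ 1) (hT : 1 ≤ T) :
    (1 + τ * (1 + Real.log T)) / T ≤
      (1 + τ * (1 + Real.log τ + Real.log T)) / (T : ℝ) ^ l := by
  have hT' : (1 : ℝ) ≤ T := by exact_mod_cast hT
  have hlogτ := Real.log_natCast_nonneg τ
  have hpow : (T : ℝ) ^ l ≤ T := by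
    simpa only [Real.rpow_one] using Real.rpow_le_rpow_of_exponent_le hT' hl
  gcongr
  linarith

end Rate

section Gaussian

variable {p : ℕ} {Ω : Type*} {m : MeasurableSpace Ω} {μ : Measure Ω}
  {Γ : Matrix (Fin p) (Fin p) ℝ} {w : Ω → Fin p → ℝ}

lemma hasLaw_apply_gaussianReal (hmeas : ∀ i, Measurable fun ω => w ω i)
    (hw : ∀ a : Fin p → ℝ, Measure.map (fun ω => ∑ i, a i * w ω i) μ =
      gaussianReal 0 (Real.toNNReal (a ⬝ᵥ (Γ *ᵥ a)))) (i : Fin p) :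
    HasLaw (fun ω => w ω i) (gaussianReal 0 (Γ i i).toNNReal) μ where
  aemeasurable := (hmeas i).aemeasurable
  map_eq := by
    simpa [Pi.single_apply, Matrix.mulVec_single_one, single_one_dotProduct] using
      hw (Pi.single i 1)

lemma integral_eq_zero_of_hasLaw_gaussianReal {X : Ω → ℝ} {v : NNReal}
    (hX : HasLaw X (gaussianReal 0 v) μ) : ∫ ω, X ω ∂μ = 0 :=
  hX.integral_eq.trans integral_id_gaussianReal

lemma integral_enormSq_eq_sum_of_hasLaw_gaussianReal {v : Fin p → NNReal}
    (hw : ∀ i, HasLaw (fun ω => w ω i) (gaussianReal 0 (v i)) μ) :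
    ∫ ω, enormSq (w ω) ∂μ = ∑ i, (v i : ℝ) := by
  simp only [enormSq]
  rw [integral_finsetSum _ fun i _ => (hw i).hasGaussianLaw.memLp_two.integrable_sq]
  refine Finset.sum_congr rfl fun i _ => ?_
  rw [← variance_of_integral_eq_zero (hw i).aemeasurable
    (integral_eq_zero_of_hasLaw_gaussianReal (hw i)), (hw i).variance_eq, variance_id_gaussianReal]

end Gaussian

lemma mul_ensEnergy_le_of_le_min_mul_inv {d J : ℕ} {α h L : ℝ} (hJ : 0 < J) (hα : 0 < α)
    (hL : 0 < L) {z : Fin J → Fin d → ℝ} (hE : 0 < ensEnergy J z)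
    (hh : h ≤ min (α / (J * L ^ 2)) (J / α) * (ensEnergy J z)⁻¹) :
    h * L * ensEnergy J z ≤ α / L := by
  have hhE : h * ensEnergy J z ≤ α / (J * L ^ 2) :=
    ((le_mul_inv_iff₀ hE).1 hh).trans (min_le_left _ _)
  have hJ' : (1 : ℝ) ≤ J := by exact_mod_cast hJ
  calc h * L * ensEnergy J z = h * ensEnergy J z * L := by ring
    _ ≤ α / (1 * L ^ 2) * L := by gcongr; exact hhE.trans (by gcongr)
    _ = α / L := by field_simp

end Deki

theorem deki_ergodic_convergence_general
    {d p J : ℕ} (hJ : 0 < J)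
    {Ω : Type*} {m : MeasurableSpace Ω} {μ : Measure Ω} [IsProbabilityMeasure μ]
    {𝓕 : Filtration ℕ m} {h α a σ θ W : ℝ} (hα : 0 < α) (hh : 0 < h) (hσ : 0 < σ) (hθ : θ < 1)
    {A : Matrix (Fin d) (Fin d) ℝ} (hA : A.PosSemidef) {zstar : Fin d → ℝ}
    {S : ℕ → Ω → Matrix (Fin p) (Fin d) ℝ} {w : ℕ → Ω → Fin p → ℝ}
    {z : ℕ → Ω → Fin J → Fin d → ℝ} (hz : Deki.IsDekiProcess μ 𝓕 h α a σ θ W zstar S w z) :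
    ∃ C > 0, ∀ ε, ∀ τ : ℕ, 1 ≤ τ →
      (∀ t : ℕ, 1 ≤ t → ∀ᵐ ω ∂μ,
        opNorm ((Matrix.of fun i k =>
          (μ[fun ω' => ((S (t + 1 + τ) ω')ᵀ * S (t + 1 + τ) ω') i k | 𝓕 t]) ω) - A) ≤ ε) →
      ∀ T : ℕ, τ + 1 ≤ T →
        (∫ ω, limObj A α zstar (ensMean J (z T ω)) ∂μ) - limObj A α zstar (limOpt A α zstar) ≤
          C * (ε + (1 + (τ : ℝ) * (1 + Real.log T)) / (T : ℝ)) := by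
  obtain ⟨k₀, k₁, k₂, k₃, h₀, h₁, h₂, h₃, hgap⟩ :=
    hz.exists_integral_limObj_ensMean_sub_le hJ hh hα hσ hθ hA
  refine ⟨k₀ + k₁ + k₂ + k₃ + 1, by positivity, fun ε τ hτ hmix T hT => ?_⟩
  have hε : 0 ≤ ε := (hmix 1 le_rfl).exists.elim fun _ hω => (norm_nonneg _).trans hω
  exact (hgap ε τ hτ hmix T hT).trans ((Deki.rate_le h₀ h₁ h₂ h₃ hε hτ (by omega)).trans
    (mul_le_mul_of_nonneg_right (le_add_of_nonneg_right zero_le_one) (by positivity)))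

/-- Convergence of DEKI with ergodic data (Theorem 2.2): under the ergodic DEKI setting,
with `C_0 ⪰ σ_l I` a.s., `λ = 2ασ_l ∈ (0,1)`, `E_0 > 0` and the step-size condition,
there is `C > 0`, independent of `ε`, `τ` and `T`, such that whenever the mixing bound
`‖E[S_{t+1+τ}ᵀS_{t+1+τ}|𝓕_t] − A‖ ≤ ε` holds a.s. for all `t ≥ 1`, then for all
`T ≥ τ + 1`, `E[J(z̄_T)] − J(z^{opt}) ≤ C·(ε + (1 + τ(1 + log τ + log T))/T^λ)`. -/
theorem deki_ergodic_convergence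
    {d p J : ℕ} (hd : 0 < d) (hp : 0 < p) (hJ : 0 < J)
    {Ω : Type*} {m : MeasurableSpace Ω} (μ : Measure Ω) [IsProbabilityMeasure μ]
    (𝓕 : Filtration ℕ m)
    (α h Amax σl : ℝ) (hα : 0 < α) (hh : 0 < h) (hAmax : 0 < Amax) (hσl : 0 < σl)
    (hlam : 2 * α * σl < 1)
    (A : Matrix (Fin d) (Fin d) ℝ) (hA_pd : A.PosDef)
    (hA_le_one : ((1 : Matrix (Fin d) (Fin d) ℝ) - A).PosSemidef)
    (zstar : Fin d → ℝ)
    (Γ : Matrix (Fin p) (Fin p) ℝ) (hΓ : Γ.PosDef)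
    (S : ℕ → Ω → Matrix (Fin p) (Fin d) ℝ)
    (w : ℕ → Ω → Fin p → ℝ) (u : ℕ → Ω → Fin p → ℝ)
    (z : ℕ → Ω → Fin J → Fin d → ℝ)
    -- the observation operators are adapted and uniformly bounded
    (hS_adapted : ∀ (t : ℕ) i k, Measurable[𝓕 t] fun ω => S t ω i k)
    (hS_bound : ∀ t : ℕ, ∀ᵐ ω ∂μ, opNorm ((S t ω)ᵀ * (S t ω)) ≤ Amax)
    -- the noise is i.i.d. centered Gaussian with covariance Γ, adapted and
    -- independent of the past and of the current observation operator
    (hw_meas : ∀ (t : ℕ) i, Measurable[𝓕 (t+1)] fun ω => w (t+1) ω i)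
    (hw_gauss : ∀ (t : ℕ) (a : Fin p → ℝ),
      Measure.map (fun ω => ∑ i, a i * w t ω i) μ =
        ProbabilityTheory.gaussianReal 0 (Real.toNNReal (a ⬝ᵥ (Γ *ᵥ a))))
    (hw_indep : ∀ t : ℕ, ProbabilityTheory.Indep
      (MeasurableSpace.comap (fun ω (i : Fin p) => w (t+1) ω i) inferInstance)
      (𝓕 t ⊔ MeasurableSpace.comap
        (fun ω (ik : Fin p × Fin d) => S (t+1) ω ik.1 ik.2) inferInstance) μ)
    -- observations and DEKI dynamics
    (hu : ∀ (t : ℕ) ω, u t ω = (S t ω) *ᵥ zstar + w t ω)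
    (hupd : ∀ (t : ℕ) ω (j : Fin J), z (t+1) ω j = z t ω j -
      h • ((ensCov J (z t ω)) *ᵥ
        ((S (t+1) ω)ᵀ *ᵥ ((S (t+1) ω) *ᵥ (z t ω j) - u (t+1) ω) + α • z t ω j)))
    -- initial ensemble: 𝓕₀-measurable, square-integrable, C₀ ⪰ σₗ I a.s.,
    -- E₀ > 0 a.s. and step-size condition a.s.
    (hz0_meas : ∀ (j : Fin J) i, Measurable[𝓕 0] fun ω => z 0 ω j i)
    (hz0_int : ∀ j : Fin J, Integrable (fun ω => enormSq (z 0 ω j)) μ)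
    (hC0 : ∀ᵐ ω ∂μ,
      (ensCov J (z 0 ω) - σl • (1 : Matrix (Fin d) (Fin d) ℝ)).PosSemidef)
    (hE0 : ∀ᵐ ω ∂μ, 0 < ensEnergy J (z 0 ω))
    (hstep : ∀ᵐ ω ∂μ, h ≤
      min (α / ((J:ℝ) * (Amax + α)^2)) ((J:ℝ)/α) * (ensEnergy J (z 0 ω))⁻¹) :
    ∃ C > 0, ∀ ε > 0, ∀ τ : ℕ, 1 ≤ τ →
      (∀ t : ℕ, 1 ≤ t → ∀ᵐ ω ∂μ,
        opNorm ((Matrix.of fun i k =>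
          (μ[fun ω' => ((S (t+1+τ) ω')ᵀ * (S (t+1+τ) ω')) i k | 𝓕 t]) ω) - A) ≤ ε) →
      ∀ T : ℕ, τ + 1 ≤ T →
        (∫ ω, limObj A α zstar (ensMean J (z T ω)) ∂μ) - limObj A α zstar (limOpt A α zstar) ≤
          C * (ε + (1 + (τ:ℝ) * (1 + Real.log τ + Real.log T)) / (T:ℝ) ^ (2 * α * σl)) := by
  have hw (t : ℕ) := Deki.hasLaw_apply_gaussianReal
    (fun i => (hw_meas t i).mono (𝓕.le _) le_rfl) (hw_gauss (t + 1))
  have hz : Deki.IsDekiProcess μ 𝓕 h α Amax σl (α / (Amax + α)) (∑ i, ((Γ i i).toNNReal : ℝ))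
      zstar S w z :=
    { isDekiPath ω t j := by simpa only [hu] using hupd t ω j
      measurable_operator := hS_adapted
      opNorm_le := hS_bound
      measurable_noise := hw_meas
      memLp_noise t i := (hw t i).hasGaussianLaw.memLp_two
      integral_noise t i := Deki.integral_eq_zero_of_hasLaw_gaussianReal (hw t i)
      integral_noise_sq_le t := (Deki.integral_enormSq_eq_sum_of_hasLaw_gaussianReal (hw t)).le
      indep_noise := hw_indep
      measurable_init := hz0_meas
      integrable_init := hz0_int
      coercive_init := hC0
      energy_init := by
        filter_upwards [hE0, hstep] with ω hE hh using
          Deki.mul_ensEnergy_le_of_le_min_mul_inv hJ hα (by positivity) hE hh }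
  obtain ⟨C, hC, hgap⟩ := deki_ergodic_convergence_general hJ hα hh hσl
    ((div_lt_one (by positivity)).2 (lt_add_of_pos_left α hAmax)) hA_pd.posSemidef hz
  refine ⟨C, hC, fun ε _ τ hτ hmix T hT => (hgap ε τ hτ hmix T hT).trans ?_⟩
  gcongr C * (ε + ?_)
  exact Deki.one_add_mul_log_div_le_div_rpow hlam.le (by omega)
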